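/- Let ω be a radial weight on 𝔻 and 0<p,q<∞ with ∫₀¹ ω̂(t)(1−t)^{q−2} dt < ∞. Write A(f)=∫_𝔻 |f(z)|^p (1−|z|)^{q−2} ω̂(z) dA(z) and B(f)=∫_𝔻 |f(z)|^p (1−|z|)^{q−1} ω(z) dA(z). Then: (i) if 0<q<1, there exists C≥1 with (1/C)B(f) ≤ A(f) ≤ C·B(f) for all analytic f on 𝔻 if and only if the radial weight z ↦ ω̂(z)(1−|z|)^{q−2} belongs to D̂; (ii) if q=1, such a two-sided comparison holds if and only if z ↦ ω̂(z)(1−|z|)^{−1} belongs to 𝒟; (iii) if 1<q<∞, it holds if and only if ω belongs to 𝒟. -/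

import Mathlib

open MeasureTheory Real Set Metric

noncomputable section

/-- The tail integral `ω̂(r) = ∫_r^1 ω(t) dt` of a radial weight, as a function of the radius. -/
def tailInt (ω : ℝ → ℝ) (r : ℝ) : ℝ := ∫ t in Ioo r 1, ω t

/-- A radial weight on the unit disc, identified with its profile on `[0,1)`:
nonnegative, measurable, integrable on `(0,1)`, with strictly positive tail integrals. -/
def IsRadialWeight (ω : ℝ → ℝ) : Prop :=
  Measurable ω ∧ (∀ r, 0 ≤ ω r) ∧ IntegrableOn ω (Ioo (0:ℝ) 1) ∧
    ∀ r ∈ Ico (0:ℝ) 1, 0 < tailInt ω r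

/-- The class `D̂` of radial weights whose tail integral satisfies a doubling condition. -/
def Dhat (ω : ℝ → ℝ) : Prop :=
  ∃ C : ℝ, 1 < C ∧ ∀ r ∈ Ico (0:ℝ) 1, tailInt ω r ≤ C * tailInt ω ((1 + r) / 2)

/-- The class `Ď` of radial weights. -/
def Dcheck (ω : ℝ → ℝ) : Prop :=
  ∃ K : ℝ, 1 < K ∧ ∃ C : ℝ, 1 < C ∧ ∀ r ∈ Ico (0:ℝ) 1,
    C * tailInt ω (1 - (1 - r) / K) ≤ tailInt ω r

/-- The class `𝒟 = D̂ ∩ Ď`. -/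
def Dclass (ω : ℝ → ℝ) : Prop := Dhat ω ∧ Dcheck ω

/-- The moment `ω_x = ∫_0^1 r^x ω(r) dr` of a radial weight. -/
def momentW (ω : ℝ → ℝ) (x : ℝ) : ℝ := ∫ r in Ioo (0:ℝ) 1, r ^ x * ω r

/-- The class `ℳ` of radial weights. -/
def Mclass (ω : ℝ → ℝ) : Prop :=
  ∃ K : ℝ, 1 < K ∧ ∃ C : ℝ, 1 < C ∧ ∀ x : ℝ, 1 ≤ x → C * momentW ω (K * x) ≤ momentW ω x

/-- The maximum modulus `M_∞(r,f)` on the circle of radius `r`. -/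
def Minf (f : ℂ → ℂ) (r : ℝ) : ℝ :=
  sSup ((fun z => ‖f z‖) '' sphere (0:ℂ) r)

/-- The integral mean `M_q(r,f)` for `0 < q < ∞`. -/
def Mq (q : ℝ) (f : ℂ → ℂ) (r : ℝ) : ℝ :=
  ((2 * π)⁻¹ * ∫ θ in (0:ℝ)..(2 * π),
      ‖f ((r : ℂ) * Complex.exp ((θ : ℂ) * Complex.I))‖ ^ q) ^ q⁻¹

/-- `J^p_ω(f) = ∫_0^1 M_∞(r,f)^p ω(r) dr`. -/
def Jp (p : ℝ) (ω : ℝ → ℝ) (f : ℂ → ℂ) : ℝ :=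
  ∫ r in Ioo (0:ℝ) 1, Minf f r ^ p * ω r

/-- `‖f‖_{H^p_ω}^p = ∫_𝔻 p²|f|^{p-2}|f'|² ω̂(|z|) dA(z)`, integrand `0` where `f' = 0`. -/
def HpNormP (p : ℝ) (ω : ℝ → ℝ) (f : ℂ → ℂ) : ℝ :=
  ∫ z in ball (0:ℂ) 1,
    if deriv f z = 0 then 0
    else p ^ 2 * ‖f z‖ ^ (p - 2) * ‖deriv f z‖ ^ 2
        * tailInt ω (‖z‖)

/-- `‖f‖_{S^p_ω}^p = ∫_0^1 (∫_{D(0,r)} |f'|² dA)^{p/2} ω(r) dr`. -/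
def SpNormP (p : ℝ) (ω : ℝ → ℝ) (f : ℂ → ℂ) : ℝ :=
  ∫ r in Ioo (0:ℝ) 1,
    (∫ z in ball (0:ℂ) r, ‖deriv f z‖ ^ 2) ^ (p / 2) * ω r

/-- The `k`-th Maclaurin coefficient `f̂(k) = f^{(k)}(0)/k!`. -/
def coefF (f : ℂ → ℂ) (k : ℕ) : ℂ := iteratedDeriv k f 0 / (k.factorial : ℂ)

/-- Weighted Bergman-type integral `∫_𝔻 |f(z)|^p (1-|z|)^x w(|z|) dA(z)`. -/
def Apq (p x : ℝ) (w : ℝ → ℝ) (f : ℂ → ℂ) : ℝ :=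
  ∫ z in ball (0:ℂ) 1,
    ‖f z‖ ^ p * (1 - ‖z‖) ^ x * w (‖z‖)

/-- Weighted Dirichlet-type integral `∫_𝔻 |f'(z)|^p (1-|z|)^x w(|z|) dA(z)`. -/
def DirInt (p x : ℝ) (w : ℝ → ℝ) (f : ℂ → ℂ) : ℝ :=
  ∫ z in ball (0:ℂ) 1,
    ‖deriv f z‖ ^ p * (1 - ‖z‖) ^ x * w (‖z‖)

/-- The class `𝒮` of normalized univalent functions on the unit disc. -/
def InSclass (f : ℂ → ℂ) : Prop :=
  DifferentiableOn ℂ f (ball (0:ℂ) 1) ∧ InjOn f (ball (0:ℂ) 1) ∧ f 0 = 0 ∧ deriv f 0 = 1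


lemma sub_mean_aux {f : ℂ → ℂ} {c : ℂ} {R p : ℝ} (hR : 0 < R) (hp : 0 < p)
    (hf : AnalyticOnNhd ℂ f (closedBall c R)) (hL : 1 / p ≤ Real.log ‖f c‖) :
    ‖f c‖ ^ p ≤ circleAverage (fun z => ‖f z‖ ^ p) c R := by
  have hfc : f c ≠ 0 := by
    intro h
    rw [h] at hL
    simp at hL
    linarith
  have habs : |R| = R := abs_of_pos hR
  have hf' : AnalyticOnNhd ℂ f (closedBall c |R|) := by rwa [habs]
  have hJ := hf'.circleAverage_log_norm hR.ne' hfc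
  have hJ2 : Real.log ‖f c‖ ≤ circleAverage (fun z => Real.log ‖f z‖) c R := by
    have : 0 ≤ ∑ᶠ u, (MeromorphicOn.divisor f (closedBall c |R|) u : ℝ) *
        Real.log (R * ‖c - u‖⁻¹) := by
      apply finsum_nonneg
      intro u
      by_cases hu : u ∈ closedBall c |R|
      · apply mul_nonneg
        · have := MeromorphicOn.AnalyticOnNhd.divisor_nonneg hf'
          exact_mod_cast this u
        · by_cases huc : c = u
          · simp [huc]
          apply Real.log_nonneg
          rw [habs, mem_closedBall', dist_eq_norm] at hu
          rw [← div_eq_mul_inv, le_div_iff₀ (by simpa [sub_eq_zero] using huc)]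
          simpa using hu
      · simp [Function.locallyFinsuppWithin.apply_eq_zero_of_notMem _ hu]
    rw [hJ]; linarith
  set a := ‖f c‖ with ha
  have hapos : 0 < a := norm_pos_iff.mpr hfc
  have hlogint : CircleIntegrable (fun z => Real.log ‖f z‖) c R :=
    (hf'.mono sphere_subset_closedBall).meromorphicOn.circleIntegrable_log_norm
  have hpow : CircleIntegrable (fun z => ‖f z‖ ^ p) c R := by
    apply ContinuousOn.circleIntegrable hR.le
    apply ContinuousOn.rpow_const
    · exact (hf.continuousOn.mono sphere_subset_closedBall).norm
    · intro x _; right; exact hp.le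
  have hpt : ∀ z, a ^ p * (1 - p * Real.log a) + (a ^ p * p) * Real.log ‖f z‖ ≤ ‖f z‖ ^ p := by
    intro z
    by_cases hz : f z = 0
    · rw [hz]
      simp [Real.zero_rpow hp.ne']
      apply mul_nonpos_of_nonneg_of_nonpos (by positivity)
      rw [div_le_iff₀ hp] at hL
      linarith
    · have hzp : 0 < ‖f z‖ := norm_pos_iff.mpr hz
      have h1 : ‖f z‖ ^ p = a ^ p * Real.exp (p * (Real.log ‖f z‖ - Real.log a)) := by
        rw [Real.rpow_def_of_pos hzp, Real.rpow_def_of_pos hapos, ← Real.exp_add]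
        ring_nf
      have h2 := Real.add_one_le_exp (p * (Real.log ‖f z‖ - Real.log a))
      rw [h1]
      have := mul_le_mul_of_nonneg_left h2 (by positivity : 0 ≤ a ^ p)
      linarith
  have hci : CircleIntegrable (fun _ : ℂ => a ^ p * (1 - p * Real.log a)) c R :=
    circleIntegrable_const _ _ _
  have hli : CircleIntegrable (fun z : ℂ => (a ^ p * p) * Real.log ‖f z‖) c R :=
    IntervalIntegrable.const_mul hlogint _
  have hm := circleAverage_mono (hci.add hli) hpow (fun z _ => hpt z)
  rw [circleAverage_add hci hli, circleAverage_const] at hm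
  have h3 : circleAverage (fun z : ℂ => (a ^ p * p) * Real.log ‖f z‖) c R =
      (a ^ p * p) * circleAverage (fun z => Real.log ‖f z‖) c R := by
    simpa using circleAverage_fun_smul (a := (a ^ p * p)) (f := fun z => Real.log ‖f z‖) (c := c) (R := R)
  rw [h3] at hm
  have := mul_le_mul_of_nonneg_left hJ2 (by positivity : 0 ≤ a ^ p * p)
  linarith

lemma sub_mean {f : ℂ → ℂ} {c : ℂ} {R p : ℝ} (hR : 0 < R) (hp : 0 < p)
    (hf : AnalyticOnNhd ℂ f (closedBall c R)) :
    ‖f c‖ ^ p ≤ circleAverage (fun z => ‖f z‖ ^ p) c R := by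
  by_cases hfc : f c = 0
  · rw [hfc]
    simp [Real.zero_rpow hp.ne']
    apply circleAverage_nonneg_of_nonneg
    intro x _; positivity
  have hpos : 0 < ‖f c‖ := norm_pos_iff.mpr hfc
  set K : ℝ := Real.exp (1 / p) / ‖f c‖ with hK
  have hKpos : 0 < K := by positivity
  have := sub_mean_aux (f := fun z => (K : ℂ) * f z) hR hp (analyticOnNhd_const.mul hf) (by
    rw [norm_mul, Complex.norm_real, Real.norm_of_nonneg hKpos.le, hK]
    rw [div_mul_cancel₀ _ hpos.ne', Real.log_exp])
  simp only [norm_mul, Complex.norm_real, Real.norm_of_nonneg hKpos.le] at this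
  have e : ∀ z, (K * ‖f z‖) ^ p = K ^ p * ‖f z‖ ^ p := fun z =>
    Real.mul_rpow hKpos.le (norm_nonneg _)
  simp only [e] at this
  have h3 : circleAverage (fun z : ℂ => K ^ p * ‖f z‖ ^ p) c R =
      K ^ p * circleAverage (fun z => ‖f z‖ ^ p) c R := by
    simpa using circleAverage_fun_smul (a := K ^ p) (f := fun z => ‖f z‖ ^ p) (c := c) (R := R)
  rw [h3] at this
  exact le_of_mul_le_mul_left this (by positivity)

def Hmean (p : ℝ) (f : ℂ → ℂ) (w : ℂ) : ℝ :=
  ∫ φ in (0:ℝ)..(2 * π), ‖f (Complex.exp ((φ : ℂ) * Complex.I) * w)‖ ^ p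

lemma Hmean_norm (p : ℝ) (f : ℂ → ℂ) (w : ℂ) : Hmean p f w = Hmean p f (‖w‖ : ℝ) := by
  unfold Hmean
  have hper : Function.Periodic
      (fun φ : ℝ => ‖f (Complex.exp ((φ : ℂ) * Complex.I) * (‖w‖ : ℝ))‖ ^ p) (2 * π) := by
    intro φ
    have : Complex.exp (((φ + 2 * π : ℝ) : ℂ) * Complex.I) = Complex.exp ((φ : ℂ) * Complex.I) := by
      push_cast
      rw [add_mul, Complex.exp_periodic]
    simp only [this]
  have h1 := hper.intervalIntegral_add_eq 0 (Complex.arg w)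
  rw [zero_add] at h1
  rw [h1]
  have h2 := intervalIntegral.integral_comp_add_right (a := 0) (b := 2 * π)
    (fun φ : ℝ => ‖f (Complex.exp ((φ : ℂ) * Complex.I) * (‖w‖ : ℝ))‖ ^ p) (Complex.arg w)
  rw [zero_add, add_comm (2 * π)] at h2
  rw [← h2]
  congr 1
  ext φ
  congr 3
  push_cast
  conv_lhs => rw [← Complex.norm_mul_exp_arg_mul_I w]
  rw [add_mul, Complex.exp_add]
  ring

lemma norm_expI (φ : ℝ) : ‖Complex.exp ((φ : ℂ) * Complex.I)‖ = 1 :=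
  Complex.norm_exp_ofReal_mul_I φ

lemma Hmean_mono {p : ℝ} (hp : 0 < p) {f : ℂ → ℂ} (hf : DifferentiableOn ℂ f (ball (0:ℂ) 1))
    {r R : ℝ} (hr : 0 ≤ r) (hrR : r ≤ R) (hR1 : R < 1) :
    Hmean p f (r : ℂ) ≤ Hmean p f (R : ℂ) := by
  have hR0 : 0 ≤ R := hr.trans hrR
  have hcf : ContinuousOn (fun z => ‖f z‖ ^ p) (ball (0:ℂ) 1) := by
    apply ContinuousOn.rpow_const hf.continuousOn.norm
    intro x _; right; exact hp.le
  -- continuity of Hmean on the closed ball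
  have hcont : Continuous (fun w : closedBall (0:ℂ) R => Hmean p f (w : ℂ)) := by
    unfold Hmean
    apply intervalIntegral.continuous_parametric_intervalIntegral_of_continuous'
    apply hcf.comp_continuous
      (f := fun x : closedBall (0:ℂ) R × ℝ => Complex.exp ((x.2 : ℂ) * Complex.I) * (x.1 : ℂ))
    · fun_prop
    · rintro ⟨⟨w, hw⟩, φ⟩
      simp only [mem_ball_zero_iff, norm_mul, norm_expI, one_mul]
      exact lt_of_le_of_lt (by simpa using hw) hR1
  have hcontOn : ContinuousOn (Hmean p f) (closedBall (0:ℂ) R) :=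
    continuousOn_iff_continuous_domRestrict.mpr hcont
  have hK : IsCompact (closedBall (0:ℂ) R) := isCompact_closedBall _ _
  obtain ⟨z1, hz1, hmax⟩ := hK.exists_isMaxOn (nonempty_closedBall.mpr hR0) hcontOn
  have hS : IsCompact (closedBall (0:ℂ) R ∩ Hmean p f ⁻¹' {Hmean p f z1}) :=
    hK.of_isClosed_subset (hcontOn.preimage_isClosed_of_isClosed isClosed_closedBall
      isClosed_singleton) inter_subset_left
  obtain ⟨z0, ⟨hz0, hz0eq⟩, hz0max⟩ := hS.exists_isMaxOn ⟨z1, hz1, rfl⟩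
    (continuous_norm.continuousOn)
  simp only [mem_preimage, mem_singleton_iff] at hz0eq
  have hle : ∀ w ∈ closedBall (0:ℂ) R, Hmean p f w ≤ Hmean p f z0 := by
    intro w hw; rw [hz0eq]; exact hmax hw
  set r0 : ℝ := ‖z0‖ with hr0
  have hr0R : r0 ≤ R := by simpa using hz0
  have hr00 : 0 ≤ r0 := norm_nonneg _
  have e0 : Hmean p f z0 = Hmean p f (r0 : ℂ) := Hmean_norm p f z0
  have hrm : (r:ℂ) ∈ closedBall (0:ℂ) R := by
    simp [abs_of_nonneg hr, hrR]
  rcases eq_or_lt_of_le hr0R with h | hlt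
  · have := hle _ hrm
    rw [e0, h] at this
    exact this
  exfalso
  set ρ := R - r0 with hρ
  have hρpos : 0 < ρ := by rw [hρ]; linarith
  have hRm : (R:ℂ) ∈ closedBall (0:ℂ) R := by simp [abs_of_nonneg hR0]
  have hRlt : Hmean p f (R:ℂ) < Hmean p f z0 := by
    apply lt_of_le_of_ne (hle _ hRm)
    intro h
    have : ‖(R:ℂ)‖ ≤ ‖z0‖ := hz0max ⟨hRm, by simp [h, hz0eq]⟩
    rw [Complex.norm_real, Real.norm_of_nonneg hR0] at this
    linarith
  have hcm : ∀ θ : ℝ, circleMap (r0:ℂ) ρ θ ∈ closedBall (0:ℂ) R := by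
    intro θ
    have h1 : circleMap (r0:ℂ) ρ θ ∈ closedBall (r0:ℂ) ρ := circleMap_mem_closedBall _ hρpos.le _
    refine closedBall_subset_closedBall' ?_ h1
    simp [abs_of_nonneg hr00, hρ]
  have hI : ∀ φ : ℝ, ‖f (Complex.exp ((φ : ℂ) * Complex.I) * r0)‖ ^ p ≤
      (2 * π)⁻¹ * ∫ θ in (0:ℝ)..(2 * π),
        ‖f (Complex.exp ((φ : ℂ) * Complex.I) * circleMap (r0:ℂ) ρ θ)‖ ^ p := by
    intro φ
    have han : AnalyticOnNhd ℂ (fun z => f (Complex.exp ((φ : ℂ) * Complex.I) * z))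
        (closedBall (r0:ℂ) ρ) := by
      have h1 : AnalyticOnNhd ℂ (fun z => f (Complex.exp ((φ : ℂ) * Complex.I) * z))
          (ball (0:ℂ) 1) := by
        apply DifferentiableOn.analyticOnNhd _ isOpen_ball
        apply hf.comp (by fun_prop)
        intro z hz
        simpa [norm_expI] using hz
      apply h1.mono
      intro z hz
      have : z ∈ closedBall (0:ℂ) R := by
        refine closedBall_subset_closedBall' ?_ hz
        simp [abs_of_nonneg hr00, hρ]
      simp at this ⊢
      linarith
    have := sub_mean hρpos hp han
    simpa [circleAverage] using this
  have hcont2 : Continuous (fun x : ℝ × ℝ =>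
      ‖f (Complex.exp ((x.1 : ℂ) * Complex.I) * circleMap (r0:ℂ) ρ x.2)‖ ^ p) := by
    apply hcf.comp_continuous (f := fun x : ℝ × ℝ =>
      Complex.exp ((x.1 : ℂ) * Complex.I) * circleMap (r0:ℂ) ρ x.2)
    · have := (continuous_circleMap (r0:ℂ) ρ)
      fun_prop
    · rintro ⟨φ, θ⟩
      have := hcm θ
      simp only [mem_ball_zero_iff, norm_mul, norm_expI, one_mul]
      exact lt_of_le_of_lt (by simpa using this) hR1
  have hpi : (0:ℝ) ≤ 2 * π := by positivity
  have h1 : Hmean p f (r0:ℂ) ≤ ∫ φ in (0:ℝ)..(2 * π), (2 * π)⁻¹ * ∫ θ in (0:ℝ)..(2 * π),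
        ‖f (Complex.exp ((φ : ℂ) * Complex.I) * circleMap (r0:ℂ) ρ θ)‖ ^ p := by
    unfold Hmean
    apply intervalIntegral.integral_mono_on hpi _ _ (fun φ _ => hI φ)
    · apply Continuous.intervalIntegrable
      apply hcf.comp_continuous (f := fun φ : ℝ => Complex.exp ((φ : ℂ) * Complex.I) * (r0:ℂ))
      · fun_prop
      · intro φ
        simp only [mem_ball_zero_iff, norm_mul, norm_expI, one_mul, Complex.norm_real,
          Real.norm_of_nonneg hr00]
        linarith
    · apply Continuous.intervalIntegrable
      apply Continuous.mul continuous_const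
      apply intervalIntegral.continuous_parametric_intervalIntegral_of_continuous'
      exact hcont2
  rw [intervalIntegral.integral_const_mul, intervalIntegral_intervalIntegral_swap] at h1
  swap
  · apply IntegrableOn.mono_set (t := uIcc 0 (2 * π) ×ˢ uIcc 0 (2 * π))
    · exact hcont2.continuousOn.integrableOn_compact (isCompact_uIcc.prod isCompact_uIcc)
    · exact prod_mono uIoc_subset_uIcc uIoc_subset_uIcc
  have h2 : (∫ θ in (0:ℝ)..(2 * π), Hmean p f (circleMap (r0:ℂ) ρ θ)) <
      ∫ θ in (0:ℝ)..(2 * π), Hmean p f z0 := by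
    apply intervalIntegral.integral_lt_integral_of_continuousOn_of_le_of_exists_lt (by positivity)
    · apply Continuous.continuousOn
      exact hcontOn.comp_continuous (continuous_circleMap _ _) hcm
    · exact continuousOn_const
    · intro θ _
      exact hle _ (hcm θ)
    · refine ⟨0, ⟨le_rfl, hpi⟩, ?_⟩
      have : circleMap (r0:ℂ) ρ 0 = (R:ℂ) := by
        simp [circleMap, hρ]
      rw [this]; exact hRlt
  rw [intervalIntegral.integral_const, smul_eq_mul, sub_zero] at h2
  have h3 : (2 * π)⁻¹ * (∫ θ in (0:ℝ)..(2 * π), Hmean p f (circleMap (r0:ℂ) ρ θ)) <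
      Hmean p f z0 := by
    rw [inv_mul_lt_iff₀ (by positivity)]
    exact h2
  rw [e0] at h3
  exact absurd h1 (not_le.mpr h3)

open scoped ENNReal

lemma Hmean_nonneg (p : ℝ) (f : ℂ → ℂ) (w : ℂ) : 0 ≤ Hmean p f w := by
  unfold Hmean
  apply intervalIntegral.integral_nonneg (by positivity)
  intro φ _; positivity

lemma Hmean_lintegral {p : ℝ} (hp : 0 < p) {f : ℂ → ℂ}
    (hf : DifferentiableOn ℂ f (ball (0:ℂ) 1)) {r : ℝ} (hr : r ∈ Ioo (0:ℝ) 1) :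
    ∫⁻ θ in Ioo (-π) π, ENNReal.ofReal (‖f (Complex.exp ((θ : ℂ) * Complex.I) * r)‖ ^ p) =
      ENNReal.ofReal (Hmean p f r) := by
  have hcf : ContinuousOn (fun z => ‖f z‖ ^ p) (ball (0:ℂ) 1) := by
    apply ContinuousOn.rpow_const hf.continuousOn.norm
    intro x _; right; exact hp.le
  have hc : Continuous (fun φ : ℝ => ‖f (Complex.exp ((φ : ℂ) * Complex.I) * r)‖ ^ p) := by
    apply hcf.comp_continuous (f := fun φ : ℝ => Complex.exp ((φ : ℂ) * Complex.I) * (r:ℂ))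
    · fun_prop
    · intro φ
      simp only [mem_ball_zero_iff, norm_mul, norm_expI, one_mul, Complex.norm_real,
        Real.norm_of_nonneg hr.1.le]
      exact hr.2
  have hper : Function.Periodic
      (fun φ : ℝ => ‖f (Complex.exp ((φ : ℂ) * Complex.I) * r)‖ ^ p) (2 * π) := by
    intro φ
    have : Complex.exp (((φ + 2 * π : ℝ) : ℂ) * Complex.I) = Complex.exp ((φ : ℂ) * Complex.I) := by
      push_cast
      rw [add_mul, Complex.exp_periodic]
    simp only [this]
  have h1 := hper.intervalIntegral_add_eq 0 (-π)
  rw [zero_add, show -π + 2 * π = π by ring] at h1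
  unfold Hmean
  rw [h1, intervalIntegral.integral_of_le (by linarith [Real.pi_pos]), integral_Ioc_eq_integral_Ioo,
    ofReal_integral_eq_lintegral_ofReal]
  · exact (hc.integrableOn_Icc (a := -π) (b := π)).mono_set Ioo_subset_Icc_self
  · exact Filter.Eventually.of_forall fun φ => by positivity

lemma polar_lintegral {p : ℝ} (hp : 0 < p) {f : ℂ → ℂ}
    (hf : DifferentiableOn ℂ f (ball (0:ℂ) 1)) {w : ℝ → ℝ} (hw : Measurable w) :
    ∫⁻ z in ball (0:ℂ) 1, ENNReal.ofReal (‖f z‖ ^ p * w ‖z‖) =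
      ∫⁻ r in Ioo (0:ℝ) 1, ENNReal.ofReal (r * Hmean p f r) * ENNReal.ofReal (w r) := by
  have hcf : ContinuousOn (fun z => ‖f z‖ ^ p) (ball (0:ℂ) 1) := by
    apply ContinuousOn.rpow_const hf.continuousOn.norm
    intro x _; right; exact hp.le
  classical
  set g : ℂ → ℝ := (ball (0:ℂ) 1).indicator (fun z => ‖f z‖ ^ p) with hg
  have hgm : Measurable g := by
    rw [hg, ← piecewise_eq_indicator]
    exact hcf.measurable_piecewise continuousOn_const measurableSet_ball
  have hg0 : ∀ z, 0 ≤ g z := by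
    intro z; apply indicator_nonneg; intro z _; positivity
  have e1 : ∫⁻ z in ball (0:ℂ) 1, ENNReal.ofReal (‖f z‖ ^ p * w ‖z‖) =
      ∫⁻ z, ENNReal.ofReal (g z * w ‖z‖) := by
    rw [← lintegral_indicator measurableSet_ball]
    congr 1; ext z
    by_cases hz : z ∈ ball (0:ℂ) 1 <;> simp [hg, hz, indicator]
  rw [e1, ← Complex.lintegral_comp_polarCoord_symm]
  have hpc : Measurable (fun x : ℝ × ℝ => Complex.polarCoord.symm x) := by
    simp only [Complex.polarCoord_symm_apply]
    fun_prop
  rw [show polarCoord.target = Ioi (0:ℝ) ×ˢ Ioo (-π) π from rfl, Measure.volume_eq_prod,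
    ← Measure.prod_restrict, lintegral_prod]
  swap
  · apply Measurable.aemeasurable
    simp only [smul_eq_mul]
    refine Measurable.fun_mul (by fun_prop) ?_
    · apply Measurable.ennreal_ofReal
      exact (hgm.comp hpc).mul (hw.comp (hpc.norm))
  have e2 : ∀ r ∈ Ioi (0:ℝ), ∫⁻ θ in Ioo (-π) π, ENNReal.ofReal (r, θ).1 •
      ENNReal.ofReal (g (Complex.polarCoord.symm (r, θ)) * w ‖Complex.polarCoord.symm (r, θ)‖) =
      (Ioo (0:ℝ) 1).indicator
        (fun r : ℝ => ENNReal.ofReal (r * Hmean p f r) * ENNReal.ofReal (w r)) r := by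
    intro r hr
    have hr' : (0:ℝ) < r := hr
    have hnorm : ∀ θ : ℝ, ‖Complex.polarCoord.symm (r, θ)‖ = r := by
      intro θ; rw [Complex.norm_polarCoord_symm]; exact abs_of_pos hr'
    have hpt : ∀ θ : ℝ, Complex.polarCoord.symm (r, θ) = Complex.exp ((θ : ℂ) * Complex.I) * r := by
      intro θ
      rw [Complex.polarCoord_symm_apply, Complex.exp_mul_I]
      simp; ring
    simp only [hnorm]
    by_cases hr1 : r < 1
    · have hm : r ∈ Ioo (0:ℝ) 1 := ⟨hr', hr1⟩
      rw [indicator_of_mem hm]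
      have e3 : ∀ θ : ℝ, ENNReal.ofReal r • ENNReal.ofReal (g (Complex.polarCoord.symm (r, θ)) * w r)
          = (ENNReal.ofReal r * ENNReal.ofReal (w r)) *
            ENNReal.ofReal (‖f (Complex.exp ((θ : ℂ) * Complex.I) * r)‖ ^ p) := by
        intro θ
        have : g (Complex.polarCoord.symm (r, θ)) =
            ‖f (Complex.exp ((θ : ℂ) * Complex.I) * r)‖ ^ p := by
          rw [hg, indicator_of_mem, hpt]
          rw [mem_ball_zero_iff, hnorm]; exact hr1
        rw [ENNReal.ofReal_mul (hg0 _), this, smul_eq_mul]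
        ring
      simp only [e3]
      rw [lintegral_const_mul', Hmean_lintegral hp hf hm, ENNReal.ofReal_mul hr'.le]
      · ring
      · exact ENNReal.mul_ne_top ENNReal.ofReal_ne_top ENNReal.ofReal_ne_top
    · rw [indicator_of_notMem (by simp; intro _; linarith)]
      have : ∀ θ : ℝ, g (Complex.polarCoord.symm (r, θ)) = 0 := by
        intro θ
        rw [hg, indicator_of_notMem]
        rw [mem_ball_zero_iff, hnorm]; exact hr1
      simp only [this, zero_mul, ENNReal.ofReal_zero, smul_zero, lintegral_zero]
  rw [setLIntegral_congr_fun measurableSet_Ioi e2, lintegral_indicator measurableSet_Ioo,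
    Measure.restrict_restrict measurableSet_Ioo, inter_eq_left.mpr Ioo_subset_Ioi_self]

lemma Apq_eq {p : ℝ} (hp : 0 < p) (x : ℝ) {f : ℂ → ℂ}
    (hf : DifferentiableOn ℂ f (ball (0:ℂ) 1)) {w : ℝ → ℝ} (hw : Measurable w)
    (hw0 : ∀ r ∈ Ico (0:ℝ) 1, 0 ≤ w r) :
    Apq p x w f = (∫⁻ r in Ioo (0:ℝ) 1, ENNReal.ofReal (r * Hmean p f r) *
      ENNReal.ofReal (w r * (1 - r) ^ x)).toReal := by
  have hcf : ContinuousOn (fun z => ‖f z‖ ^ p) (ball (0:ℂ) 1) := by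
    apply ContinuousOn.rpow_const hf.continuousOn.norm
    intro x _; right; exact hp.le
  have hW : Measurable (fun r => w r * (1 - r) ^ x) := by fun_prop
  unfold Apq
  rw [integral_eq_lintegral_of_nonneg_ae]
  · rw [← polar_lintegral hp hf hW]
    congr 2; ext z; congr 1; ring
  · filter_upwards [ae_restrict_mem measurableSet_ball] with z hz
    have hz' : ‖z‖ < 1 := by simpa using hz
    have := hw0 ‖z‖ ⟨norm_nonneg _, hz'⟩
    have : 0 ≤ (1 - ‖z‖) := by linarith
    positivity
  · apply AEStronglyMeasurable.mul
    · apply AEStronglyMeasurable.mul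
      · exact hcf.aestronglyMeasurable measurableSet_ball
      · apply Measurable.aestronglyMeasurable; fun_prop
    · apply Measurable.aestronglyMeasurable; fun_prop

lemma mono_compare {G W V : ℝ → ℝ} (hG : MonotoneOn G (Ioo (0:ℝ) 1))
    (hG0 : ∀ r ∈ Ioo (0:ℝ) 1, 0 ≤ G r) (hW : Measurable W) (hV : Measurable V) {C : ℝ≥0∞}
    (hC : C ≠ ⊤)
    (h : ∀ s ∈ Ico (0:ℝ) 1, ∫⁻ r in Ioo s 1, ENNReal.ofReal (V r) ≤
      C * ∫⁻ r in Ioo s 1, ENNReal.ofReal (W r)) :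
    ∫⁻ r in Ioo (0:ℝ) 1, ENNReal.ofReal (G r) * ENNReal.ofReal (V r) ≤
      C * ∫⁻ r in Ioo (0:ℝ) 1, ENNReal.ofReal (G r) * ENNReal.ofReal (W r) := by
  set I := volume.restrict (Ioo (0:ℝ) 1) with hI
  have hGm : AEMeasurable G I := aemeasurable_restrict_of_monotoneOn measurableSet_Ioo hG
  have key : ∀ U : ℝ → ℝ, Measurable U → ∫⁻ r in Ioo (0:ℝ) 1, ENNReal.ofReal (G r) * ENNReal.ofReal (U r)
      = ∫⁻ t in Ioi 0, (I.withDensity fun r => ENNReal.ofReal (U r)) {a | t < G a} := by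
    intro U hU
    have hac : (I.withDensity fun r => ENNReal.ofReal (U r)) ≪ I := withDensity_absolutelyContinuous _ _
    rw [← lintegral_eq_lintegral_meas_lt]
    · rw [lintegral_withDensity_eq_lintegral_mul₀ hU.ennreal_ofReal.aemeasurable]
      · apply lintegral_congr; intro r; simp [mul_comm]
      · exact hGm.ennreal_ofReal
    · apply hac.ae_le
      filter_upwards [ae_restrict_mem measurableSet_Ioo] with r hr using hG0 r hr
    · exact hGm.mono_ac hac
  rw [key V hV, key W hW, ← lintegral_const_mul' _ _ hC]
  apply lintegral_mono
  intro t
  have hset : ∀ U : ℝ → ℝ, Measurable U → ∀ S : Set ℝ, MeasurableSet S →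
     (I.withDensity fun r => ENNReal.ofReal (U r)) S = ∫⁻ r in S ∩ Ioo 0 1, ENNReal.ofReal (U r) := by
    intro U hU S hS
    rw [withDensity_apply _ hS, hI, Measure.restrict_restrict hS]
  have hnull : ∀ U : ℝ → ℝ, Measurable U →
     (I.withDensity fun r => ENNReal.ofReal (U r)) (Ioo 0 1)ᶜ = 0 := by
    intro U hU
    rw [hset U hU _ measurableSet_Ioo.compl]
    simp
  set S : Set ℝ := {a | t < G a} ∩ Ioo 0 1 with hS
  have hSV : (I.withDensity fun r => ENNReal.ofReal (V r)) {a | t < G a} ≤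
      (I.withDensity fun r => ENNReal.ofReal (V r)) S := by
    calc _ ≤ (I.withDensity fun r => ENNReal.ofReal (V r)) (S ∪ (Ioo 0 1)ᶜ) := by
          apply measure_mono; intro a ha
          by_cases h : a ∈ Ioo (0:ℝ) 1
          · left; exact ⟨ha, h⟩
          · right; exact h
      _ ≤ _ := measure_union_le _ _
      _ = _ := by rw [hnull V hV, add_zero]
  have hSW : (I.withDensity fun r => ENNReal.ofReal (W r)) S ≤
    (I.withDensity fun r => ENNReal.ofReal (W r)) {a | t < G a} := measure_mono inter_subset_left
  refine hSV.trans (le_trans ?_ (mul_le_mul_right hSW C))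
  rcases S.eq_empty_or_nonempty with he | hne
  · rw [he]; simp
  set s := sInf S with hs
  have hbdd : BddBelow S := ⟨0, fun a ha => ha.2.1.le⟩
  have hs0 : 0 ≤ s := le_csInf hne (fun a ha => ha.2.1.le)
  have hs1 : s < 1 := by
    obtain ⟨a, ha⟩ := hne
    exact lt_of_le_of_lt (csInf_le hbdd ha) ha.2.2
  have hsub1 : Ioo s 1 ⊆ S := by
    intro a ha
    obtain ⟨b, hb, hba⟩ := exists_lt_of_csInf_lt hne ha.1
    have ha' : a ∈ Ioo (0:ℝ) 1 := ⟨lt_of_le_of_lt hs0 ha.1, ha.2⟩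
    exact ⟨lt_of_lt_of_le hb.1 (hG hb.2 ha' hba.le), ha'⟩
  have hsub2 : S ⊆ Ico s 1 := fun a ha => ⟨csInf_le hbdd ha, ha.2.2⟩
  have hIoo : Ioo s 1 ∩ Ioo 0 1 = Ioo s 1 := inter_eq_left.mpr (Ioo_subset_Ioo_left hs0)
  calc (I.withDensity fun r => ENNReal.ofReal (V r)) S
      ≤ (I.withDensity fun r => ENNReal.ofReal (V r)) (Ico s 1) := measure_mono hsub2
    _ = ∫⁻ r in Ico s 1 ∩ Ioo 0 1, ENNReal.ofReal (V r) := hset V hV _ measurableSet_Ico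
    _ ≤ ∫⁻ r in Ico s 1, ENNReal.ofReal (V r) := lintegral_mono_set inter_subset_left
    _ = ∫⁻ r in Ioo s 1, ENNReal.ofReal (V r) := by
        rw [Measure.restrict_congr_set Ioo_ae_eq_Ico]
    _ ≤ C * ∫⁻ r in Ioo s 1, ENNReal.ofReal (W r) := h s ⟨hs0, hs1⟩
    _ = C * (I.withDensity fun r => ENNReal.ofReal (W r)) (Ioo s 1) := by
        rw [hset W hW _ measurableSet_Ioo, hIoo]
    _ ≤ _ := by gcongr

lemma tailInt_measurable {w : ℝ → ℝ} (hw : Measurable w) (hw0 : ∀ r < 1, 0 ≤ w r) :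
    Measurable (tailInt w) := by
  have e : tailInt w = fun r => (∫⁻ t in Ioo r 1, ENNReal.ofReal (w t)).toReal := by
    ext r
    unfold tailInt
    rw [integral_eq_lintegral_of_nonneg_ae _ hw.aestronglyMeasurable]
    filter_upwards [ae_restrict_mem measurableSet_Ioo] with t ht using hw0 t ht.2
  rw [e]
  apply Measurable.ennreal_toReal
  apply Antitone.measurable
  intro a b hab
  exact lintegral_mono_set (Ioo_subset_Ioo_left hab)

lemma tailInt_eq (w : ℝ → ℝ) {s : ℝ} (hs : s ≤ 1) : tailInt w s = ∫ r in s..1, w r := by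
  unfold tailInt
  rw [intervalIntegral.integral_of_le hs, integral_Ioc_eq_integral_Ioo]

lemma intervalIntegrable_of {w : ℝ → ℝ} (hw : IntegrableOn w (Ioo (0:ℝ) 1)) {a b : ℝ}
    (ha : 0 ≤ a) (hab : a ≤ b) (hb : b ≤ 1) : IntervalIntegrable w volume a b := by
  rw [intervalIntegrable_iff_integrableOn_Ioo_of_le hab]
  exact hw.mono_set (Ioo_subset_Ioo ha hb)

lemma tail_split {w : ℝ → ℝ} (hw : IntegrableOn w (Ioo (0:ℝ) 1)) {a b : ℝ}
    (ha : 0 ≤ a) (hab : a ≤ b) (hb : b ≤ 1) :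
    tailInt w a = (∫ r in a..b, w r) + tailInt w b := by
  rw [tailInt_eq w (hab.trans hb), tailInt_eq w hb,
    intervalIntegral.integral_add_adjacent_intervals (intervalIntegrable_of hw ha hab hb)
      (intervalIntegrable_of hw (ha.trans hab) hb le_rfl)]

lemma tail_le {w : ℝ → ℝ} (hw : IntegrableOn w (Ioo (0:ℝ) 1)) {a b M : ℝ}
    (ha : 0 ≤ a) (hab : a ≤ b) (hb : b ≤ 1) (hM : ∀ r ∈ Ioo a b, w r ≤ M) :
    tailInt w a ≤ M * (b - a) + tailInt w b := by
  rw [tail_split hw ha hab hb]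
  have := intervalIntegral.integral_mono_on_of_le_Ioo hab (intervalIntegrable_of hw ha hab hb)
    (intervalIntegrable_const (c := M)) hM
  rw [intervalIntegral.integral_const, smul_eq_mul] at this
  linarith

lemma tail_ge {w : ℝ → ℝ} (hw : IntegrableOn w (Ioo (0:ℝ) 1)) {a b M : ℝ}
    (ha : 0 ≤ a) (hab : a ≤ b) (hb : b ≤ 1) (hM : ∀ r ∈ Ioo a b, M ≤ w r) :
    M * (b - a) + tailInt w b ≤ tailInt w a := by
  rw [tail_split hw ha hab hb]
  have := intervalIntegral.integral_mono_on_of_le_Ioo hab (intervalIntegrable_const (c := M))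
    (intervalIntegrable_of hw ha hab hb) hM
  rw [intervalIntegral.integral_const, smul_eq_mul] at this
  linarith

lemma tail_anti {w : ℝ → ℝ} (hw : IntegrableOn w (Ioo (0:ℝ) 1)) (hw0 : ∀ r < 1, 0 ≤ w r) {a b : ℝ}
    (ha : 0 ≤ a) (hab : a ≤ b) (hb : b ≤ 1) : tailInt w b ≤ tailInt w a := by
  have := tail_ge hw ha hab hb (M := 0) (fun r hr => hw0 r (lt_of_lt_of_le hr.2 hb))
  linarith

lemma tail_nonneg {w : ℝ → ℝ} (hw0 : ∀ r < 1, 0 ≤ w r) (a : ℝ) : 0 ≤ tailInt w a := by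
  unfold tailInt
  exact setIntegral_nonneg measurableSet_Ioo (fun r hr => hw0 r hr.2)

lemma fubini_l {w g : ℝ → ℝ} (hw : Measurable w) (hg : Measurable g) (s : ℝ) :
    ∫⁻ r in Ioo s 1, ENNReal.ofReal (w r) * ∫⁻ t in Ioo s r, ENNReal.ofReal (g t) =
    ∫⁻ t in Ioo s 1, ENNReal.ofReal (g t) * ∫⁻ r in Ioo t 1, ENNReal.ofReal (w r) := by
  set T : Set (ℝ × ℝ) := {x | s < x.2 ∧ x.2 < x.1 ∧ x.1 < 1} with hT
  have hTm : MeasurableSet T := by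
    apply MeasurableSet.inter (measurableSet_lt measurable_const measurable_snd)
    exact (measurableSet_lt measurable_snd measurable_fst).inter
      (measurableSet_lt measurable_fst measurable_const)
  set F : ℝ → ℝ → ℝ≥0∞ := fun r t => T.indicator
    (fun x => ENNReal.ofReal (w x.1) * ENNReal.ofReal (g x.2)) (r, t) with hF
  have hFm : Measurable (Function.uncurry F) := by
    have : Function.uncurry F = T.indicator
      (fun x => ENNReal.ofReal (w x.1) * ENNReal.ofReal (g x.2)) := by ext ⟨r, t⟩; rfl
    rw [this]
    apply Measurable.indicator _ hTm
    fun_prop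
  have h1 : ∫⁻ r in Ioo s 1, ENNReal.ofReal (w r) * ∫⁻ t in Ioo s r, ENNReal.ofReal (g t) =
      ∫⁻ r, ∫⁻ t, F r t := by
    rw [← lintegral_indicator measurableSet_Ioo]
    apply lintegral_congr
    intro r
    by_cases hr : r ∈ Ioo s 1
    · rw [indicator_of_mem hr, ← lintegral_const_mul' _ _ ENNReal.ofReal_ne_top,
        ← lintegral_indicator measurableSet_Ioo]
      apply lintegral_congr
      intro t
      by_cases ht : t ∈ Ioo s r
      · have : (r, t) ∈ T := ⟨ht.1, ht.2, hr.2⟩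
        simp only [hF]
        rw [indicator_of_mem ht, indicator_of_mem this]
      · have : (r, t) ∉ T := fun h => ht ⟨h.1, h.2.1⟩
        simp only [hF]
        rw [indicator_of_notMem ht, indicator_of_notMem this]
    · rw [indicator_of_notMem hr]
      have : ∀ t, F r t = 0 := by
        intro t
        have : (r, t) ∉ T := fun h => hr ⟨h.1.trans h.2.1, h.2.2⟩
        simp only [hF]
        rw [indicator_of_notMem this]
      simp [this]
  have h2 : ∫⁻ t in Ioo s 1, ENNReal.ofReal (g t) * ∫⁻ r in Ioo t 1, ENNReal.ofReal (w r) =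
      ∫⁻ t, ∫⁻ r, F r t := by
    rw [← lintegral_indicator measurableSet_Ioo]
    apply lintegral_congr
    intro t
    by_cases ht : t ∈ Ioo s 1
    · rw [indicator_of_mem ht, ← lintegral_const_mul' _ _ ENNReal.ofReal_ne_top,
        ← lintegral_indicator measurableSet_Ioo]
      apply lintegral_congr
      intro r
      by_cases hr : r ∈ Ioo t 1
      · have : (r, t) ∈ T := ⟨ht.1, hr.1, hr.2⟩
        simp only [hF]
        rw [indicator_of_mem hr, indicator_of_mem this, mul_comm]
      · have : (r, t) ∉ T := fun h => hr ⟨h.2.1, h.2.2⟩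
        simp only [hF]
        rw [indicator_of_notMem hr, indicator_of_notMem this]
    · rw [indicator_of_notMem ht]
      have : ∀ r, F r t = 0 := by
        intro r
        have : (r, t) ∉ T := fun h => ht ⟨h.1, h.2.1.trans h.2.2⟩
        simp only [hF]
        rw [indicator_of_notMem this]
      simp [this]
  rw [h1, h2, lintegral_lintegral_swap hFm.aemeasurable]

lemma tail_ofReal {w : ℝ → ℝ} (hw : IntegrableOn w (Ioo (0:ℝ) 1)) (hw0 : ∀ r < 1, 0 ≤ w r) {s : ℝ}
    (hs : 0 ≤ s) : ∫⁻ r in Ioo s 1, ENNReal.ofReal (w r) = ENNReal.ofReal (tailInt w s) := by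
  unfold tailInt
  rw [ofReal_integral_eq_lintegral_ofReal]
  · exact hw.mono_set (Ioo_subset_Ioo_left hs)
  · filter_upwards [ae_restrict_mem measurableSet_Ioo] with r hr using hw0 r hr.2

lemma fubini_r {w g P : ℝ → ℝ} (hw : Measurable w) (hw0 : ∀ r < 1, 0 ≤ w r)
    (hwi : IntegrableOn w (Ioo (0:ℝ) 1)) (hg : Measurable g) {s : ℝ} (hs : 0 ≤ s)
    (hg0 : ∀ r ∈ Ioo s 1, 0 ≤ g r)
    (hP : Measurable P) (hP0 : ∀ r ∈ Ioo s 1, 0 ≤ P r)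
    (hgP : ∀ r ∈ Ioo s 1, IntegrableOn g (Ioo s r) ∧ ∫ t in Ioo s r, g t = P r)
    (hI : IntegrableOn (fun t => g t * tailInt w t) (Ioo s 1)) :
    IntegrableOn (fun r => w r * P r) (Ioo s 1) ∧
      ∫ r in Ioo s 1, w r * P r = ∫ t in Ioo s 1, g t * tailInt w t := by
  have hF := fubini_l hw hg s
  have h1 : ∫⁻ r in Ioo s 1, ENNReal.ofReal (w r) * ∫⁻ t in Ioo s r, ENNReal.ofReal (g t) =
      ∫⁻ r in Ioo s 1, ENNReal.ofReal (w r * P r) := by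
    apply setLIntegral_congr_fun measurableSet_Ioo
    intro r hr
    simp only
    rw [ENNReal.ofReal_mul (hw0 r hr.2), ← (hgP r hr).2, ofReal_integral_eq_lintegral_ofReal (hgP r hr).1]
    filter_upwards [ae_restrict_mem measurableSet_Ioo] with t ht
      using hg0 t ⟨ht.1, ht.2.trans hr.2⟩
  have h2 : ∫⁻ t in Ioo s 1, ENNReal.ofReal (g t) * ∫⁻ r in Ioo t 1, ENNReal.ofReal (w r) =
      ∫⁻ t in Ioo s 1, ENNReal.ofReal (g t * tailInt w t) := by
    apply setLIntegral_congr_fun measurableSet_Ioo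
    intro t ht
    simp only
    rw [ENNReal.ofReal_mul (hg0 t ht), tail_ofReal hwi hw0 (hs.trans ht.1.le)]
  rw [h1, h2] at hF
  have n1 : 0 ≤ᵐ[volume.restrict (Ioo s 1)] fun r => w r * P r := by
    filter_upwards [ae_restrict_mem measurableSet_Ioo] with r hr
      using mul_nonneg (hw0 r hr.2) (hP0 r hr)
  have n2 : 0 ≤ᵐ[volume.restrict (Ioo s 1)] fun r => g r * tailInt w r := by
    filter_upwards [ae_restrict_mem measurableSet_Ioo] with r hr
      using mul_nonneg (hg0 r hr) (tail_nonneg hw0 r)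
  have m1 : AEStronglyMeasurable (fun r => w r * P r) (volume.restrict (Ioo s 1)) := by
    apply Measurable.aestronglyMeasurable; fun_prop
  constructor
  · rw [IntegrableOn, ← lintegral_ofReal_ne_top_iff_integrable m1 n1, hF,
      lintegral_ofReal_ne_top_iff_integrable hI.1 n2]
    exact hI
  · rw [integral_eq_lintegral_of_nonneg_ae n1 m1, integral_eq_lintegral_of_nonneg_ae n2 hI.1, hF]

/-- moments via tails -/
lemma moment_tail {w : ℝ → ℝ} (hw : Measurable w) (hw0 : ∀ r < 1, 0 ≤ w r)
    (hwi : IntegrableOn w (Ioo (0:ℝ) 1)) (htm : Measurable (tailInt w)) {x : ℝ} (hx : 1 ≤ x) :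
    IntegrableOn (fun t => x * t ^ (x - 1) * tailInt w t) (Ioo 0 1) ∧
    momentW w x = ∫ t in Ioo (0:ℝ) 1, x * t ^ (x - 1) * tailInt w t := by
  have hx0 : 0 < x := by linarith
  have hI : IntegrableOn (fun t => x * t ^ (x - 1) * tailInt w t) (Ioo 0 1) := by
    apply Measure.integrableOn_of_bounded (M := x * tailInt w 0) (by simp)
    · apply Measurable.aestronglyMeasurable; fun_prop
    · filter_upwards [ae_restrict_mem measurableSet_Ioo] with t ht
      have a1 : t ^ (x - 1) ≤ 1 := Real.rpow_le_one ht.1.le ht.2.le (by linarith)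
      have a0 : 0 ≤ t ^ (x - 1) := Real.rpow_nonneg ht.1.le _
      have b0 := tail_nonneg hw0 t
      have b1 := tail_anti hwi hw0 le_rfl ht.1.le ht.2.le
      rw [Real.norm_of_nonneg (by positivity), mul_assoc]
      apply mul_le_mul_of_nonneg_left _ hx0.le
      calc _ ≤ 1 * tailInt w 0 := by gcongr
        _ = _ := one_mul _
  refine ⟨hI, ?_⟩
  have := (fubini_r (w := w) (g := fun t => x * t ^ (x - 1)) (P := fun r => r ^ x) hw hw0 hwi
    (by fun_prop) le_rfl (fun r hr => mul_nonneg hx0.le (Real.rpow_nonneg hr.1.le _)) (by fun_prop)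
    (fun r hr => Real.rpow_nonneg hr.1.le _) ?_ hI).2
  · rw [← this]
    unfold momentW
    congr 1; ext r; ring
  · intro r hr
    have hii : IntervalIntegrable (fun t : ℝ => x * t ^ (x - 1)) volume 0 r := by
      apply IntervalIntegrable.const_mul
      exact intervalIntegral.intervalIntegrable_rpow' (by linarith)
    constructor
    · exact (intervalIntegrable_iff_integrableOn_Ioo_of_le hr.1.le).mp hii
    · rw [← integral_Ioc_eq_integral_Ioo, ← intervalIntegral.integral_of_le hr.1.le,
        intervalIntegral.integral_const_mul, integral_rpow (by left; linarith)]
      rw [sub_add_cancel, Real.zero_rpow hx0.ne']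
      field_simp
      ring

structure Dat (q : ℝ) (ω W V : ℝ → ℝ) : Prop where
  ωi : IntegrableOn ω (Ioo (0:ℝ) 1)
  ω0 : ∀ r < 1, 0 ≤ ω r
  ωm : Measurable ω
  ωpos : ∀ r ∈ Ico (0:ℝ) 1, 0 < tailInt ω r
  We : ∀ t, W t = tailInt ω t * (1 - t) ^ (q - 2)
  Ve : ∀ t, V t = ω t * (1 - t) ^ (q - 1)
  Wm : Measurable W
  W0 : ∀ r < 1, 0 ≤ W r
  Wi : IntegrableOn W (Ioo (0:ℝ) 1)
  Wtm : Measurable (tailInt W)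
  Wpos : ∀ r ∈ Ico (0:ℝ) 1, 0 < tailInt W r
  Vm : Measurable V
  V0 : ∀ r < 1, 0 ≤ V r
  Vi : IntegrableOn V (Ioo (0:ℝ) 1)
  Vtm : Measurable (tailInt V)
  ident : ∀ s ∈ Ico (0:ℝ) 1,
    tailInt V s + (q - 1) * tailInt W s = tailInt ω s * (1 - s) ^ (q - 1)

lemma int_pow_aux {q : ℝ} (hq1 : q ≠ 1) {s r : ℝ} (hsr : s < r) (hr : r < 1) :
    IntegrableOn (fun t : ℝ => (1 - t) ^ (q - 2)) (Ioo s r) ∧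
      ∫ t in Ioo s r, (1 - t) ^ (q - 2) = ((1 - s) ^ (q - 1) - (1 - r) ^ (q - 1)) / (q - 1) := by
  have hc : ContinuousOn (fun t : ℝ => (1 - t) ^ (q - 2)) (Icc s r) := by
    apply ContinuousOn.rpow_const (by fun_prop)
    intro x hx; left; linarith [hx.2]
  refine ⟨hc.integrableOn_Icc.mono_set Ioo_subset_Icc_self, ?_⟩
  rw [← integral_Ioc_eq_integral_Ioo, ← intervalIntegral.integral_of_le hsr.le,
    intervalIntegral.integral_comp_sub_left (fun t : ℝ => t ^ (q - 2)) 1,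
    integral_rpow]
  · rw [show q - 2 + 1 = q - 1 by ring]
  · right
    constructor
    · intro h; apply hq1; linarith
    · rw [uIcc_of_le (by linarith)]
      intro h; linarith [h.1]

lemma mkDat {q : ℝ} {ω : ℝ → ℝ} (hω : IsRadialWeight ω)
    (hInt : IntegrableOn (fun t => tailInt ω t * (1 - t) ^ (q - 2)) (Ioo (0:ℝ) 1)) :
    Dat q ω (fun t => tailInt ω t * (1 - t) ^ (q - 2)) (fun t => ω t * (1 - t) ^ (q - 1)) := by
  obtain ⟨ωm, ω0', ωi, ωpos⟩ := hω
  have ω0 : ∀ r < 1, 0 ≤ ω r := fun r _ => ω0' r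
  have tm : Measurable (tailInt ω) := tailInt_measurable ωm ω0
  have Wm : Measurable (fun t => tailInt ω t * (1 - t) ^ (q - 2)) := by fun_prop
  have Vm : Measurable (fun t => ω t * (1 - t) ^ (q - 1)) := by fun_prop
  have W0 : ∀ r < 1, 0 ≤ (fun t => tailInt ω t * (1 - t) ^ (q - 2)) r := by
    intro r hr
    exact mul_nonneg (tail_nonneg ω0 r) (Real.rpow_nonneg (by linarith) _)
  have V0 : ∀ r < 1, 0 ≤ (fun t => ω t * (1 - t) ^ (q - 1)) r := by
    intro r hr
    exact mul_nonneg (ω0 r hr) (Real.rpow_nonneg (by linarith) _)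
  have Wpos : ∀ r ∈ Ico (0:ℝ) 1, 0 < tailInt (fun t => tailInt ω t * (1 - t) ^ (q - 2)) r := by
    intro r hr
    unfold tailInt
    rw [setIntegral_pos_iff_support_of_nonneg_ae]
    · rw [inter_eq_right.mpr]
      · simp [hr.2]
      · intro t ht
        have h1 := ωpos t ⟨hr.1.trans ht.1.le, ht.2⟩
        have h2 : 0 < (1 - t) ^ (q - 2) := Real.rpow_pos_of_pos (by linarith [ht.2]) _
        exact (mul_pos h1 h2).ne'
    · filter_upwards [ae_restrict_mem measurableSet_Ioo] with t ht using W0 t ht.2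
    · exact hInt.mono_set (Ioo_subset_Ioo_left hr.1)
  have key : ∀ s ∈ Ico (0:ℝ) 1, IntegrableOn (fun t => ω t * (1 - t) ^ (q - 1)) (Ioo s 1) ∧
      tailInt (fun t => ω t * (1 - t) ^ (q - 1)) s +
      (q - 1) * tailInt (fun t => tailInt ω t * (1 - t) ^ (q - 2)) s
        = tailInt ω s * (1 - s) ^ (q - 1) := by
    intro s hs
    have ωis := ωi.mono_set (Ioo_subset_Ioo_left (b := 1) hs.1)
    by_cases hq1 : q = 1
    · subst hq1
      simp only [sub_self, Real.rpow_zero, mul_one, zero_mul, add_zero]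
      exact ⟨ωis, trivial⟩
    have hq1' : q - 1 ≠ 0 := sub_ne_zero.mpr hq1
    have hF := fubini_r (w := ω) (g := fun t => (1 - t) ^ (q - 2))
      (P := fun r => ((1 - s) ^ (q - 1) - (1 - r) ^ (q - 1)) / (q - 1)) ωm ω0 ωi (by fun_prop)
      hs.1 (fun r hr => Real.rpow_nonneg (by linarith [hr.2]) _) (by fun_prop)
      (by
        intro r hr
        rw [← (int_pow_aux hq1 hr.1 hr.2).2]
        apply setIntegral_nonneg measurableSet_Ioo
        intro t ht
        exact Real.rpow_nonneg (by linarith [hr.2, ht.2]) _)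
      (fun r hr => int_pow_aux hq1 hr.1 hr.2)
      ((hInt.mono_set (Ioo_subset_Ioo_left hs.1)).congr_fun (fun t _ => mul_comm _ _)
        measurableSet_Ioo)
    have e : ∀ t, ω t * (1 - t) ^ (q - 1) = (1 - s) ^ (q - 1) * ω t -
        (q - 1) * (ω t * (((1 - s) ^ (q - 1) - (1 - t) ^ (q - 1)) / (q - 1))) := by
      intro t; field_simp; ring
    have i1 : IntegrableOn (fun t => (1 - s) ^ (q - 1) * ω t) (Ioo s 1) := ωis.const_mul _
    have i2 := hF.1.const_mul (q - 1)
    constructor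
    · simp only [e]
      exact i1.sub i2
    · have : tailInt (fun t => ω t * (1 - t) ^ (q - 1)) s = (1 - s) ^ (q - 1) * tailInt ω s -
        (q - 1) * tailInt (fun t => tailInt ω t * (1 - t) ^ (q - 2)) s := by
        unfold tailInt
        simp only [e]
        rw [integral_sub i1 i2, integral_const_mul, integral_const_mul, hF.2]
        congr 2
        apply setIntegral_congr_fun measurableSet_Ioo
        intro t _; exact mul_comm _ _
      rw [this]; ring
  exact ⟨ωi, ω0, ωm, ωpos, fun _ => rfl, fun _ => rfl, Wm, W0, hInt, tailInt_measurable Wm W0, Wpos,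
    Vm, V0, (key 0 ⟨le_rfl, one_pos⟩).1, tailInt_measurable Vm V0, fun s hs => (key s hs).2⟩

lemma mom_int {w : ℝ → ℝ} (hw : Measurable w) (hwi : IntegrableOn w (Ioo (0:ℝ) 1)) {x : ℝ}
    (hx : 0 ≤ x) : IntegrableOn (fun r => r ^ x * w r) (Ioo (0:ℝ) 1) := by
  apply Integrable.mono hwi
  · apply Measurable.aestronglyMeasurable; fun_prop
  · filter_upwards [ae_restrict_mem measurableSet_Ioo] with r hr
    rw [norm_mul, Real.norm_of_nonneg (Real.rpow_nonneg hr.1.le _)]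
    have : r ^ x ≤ 1 := Real.rpow_le_one hr.1.le hr.2.le hx
    nlinarith [norm_nonneg (w r)]

lemma mom_lower {w : ℝ → ℝ} (hw : Measurable w) (hw0 : ∀ r < 1, 0 ≤ w r)
    (hwi : IntegrableOn w (Ioo (0:ℝ) 1)) {x s : ℝ} (hx : 0 ≤ x) (hs : 0 ≤ s) :
    s ^ x * tailInt w s ≤ momentW w x := by
  unfold tailInt momentW
  rw [← integral_const_mul]
  calc ∫ r in Ioo s 1, s ^ x * w r ≤ ∫ r in Ioo s 1, r ^ x * w r := by
        apply setIntegral_mono_on _ _ measurableSet_Ioo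
        · intro r hr
          exact mul_le_mul_of_nonneg_right (Real.rpow_le_rpow hs hr.1.le hx) (hw0 r hr.2)
        · exact (hwi.mono_set (Ioo_subset_Ioo_left hs)).const_mul _
        · exact (mom_int hw hwi hx).mono_set (Ioo_subset_Ioo_left hs)
    _ ≤ _ := by
        apply setIntegral_mono_set (mom_int hw hwi hx)
        · filter_upwards [ae_restrict_mem measurableSet_Ioo] with r hr
            using mul_nonneg (Real.rpow_nonneg hr.1.le _) (hw0 r hr.2)
        · exact (Ioo_subset_Ioo_left hs).eventuallyLE

lemma mom_upper {w : ℝ → ℝ} (hw : Measurable w) (hw0 : ∀ r < 1, 0 ≤ w r)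
    (hwi : IntegrableOn w (Ioo (0:ℝ) 1)) {x y s : ℝ} (hx : 0 ≤ x) (hy : 0 ≤ y)
    (hs : 0 ≤ s) :
    momentW w (x + y) ≤ tailInt w s + s ^ y * momentW w x := by
  have i1 : IntegrableOn ((Ioo s 1).indicator w) (Ioo (0:ℝ) 1) := hwi.indicator measurableSet_Ioo
  have i2 := (mom_int hw hwi hx).const_mul (s ^ y)
  have e : tailInt w s = ∫ r in Ioo (0:ℝ) 1, (Ioo s 1).indicator w r := by
    rw [setIntegral_indicator measurableSet_Ioo, inter_eq_right.mpr (Ioo_subset_Ioo_left hs)]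
    rfl
  unfold momentW
  rw [e, ← integral_const_mul, ← integral_add i1 i2]
  apply setIntegral_mono_on (mom_int hw hwi (by linarith)) (i1.add i2) measurableSet_Ioo
  intro r hr
  have hw := hw0 r hr.2
  by_cases h : s < r
  · have hm : r ∈ Ioo s 1 := ⟨h, hr.2⟩
    simp only [Pi.add_apply, indicator_of_mem hm]
    have h1 : r ^ (x + y) ≤ 1 := Real.rpow_le_one hr.1.le hr.2.le (by linarith)
    have h2 : 0 ≤ s ^ y * (r ^ x * w r) :=
      mul_nonneg (Real.rpow_nonneg hs _) (mul_nonneg (Real.rpow_nonneg hr.1.le _) hw)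
    nlinarith
  · have hm : r ∉ Ioo s 1 := fun h' => h h'.1
    simp only [Pi.add_apply, indicator_of_notMem hm, zero_add]
    rw [Real.rpow_add hr.1]
    have h1 : r ^ y ≤ s ^ y := Real.rpow_le_rpow hr.1.le (not_lt.mp h) hy
    have h2 : 0 ≤ r ^ x * w r := mul_nonneg (Real.rpow_nonneg hr.1.le _) hw
    nlinarith

lemma one_sub_rpow_le {p r : ℝ} (hp : 0 < p) (hr : r ∈ Ioo (0:ℝ) 1) :
    1 - r ^ p ≤ max 1 p * (1 - r) := by
  have h1r : 0 ≤ 1 - r := by linarith [hr.2]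
  rcases le_total p 1 with h | h
  · have h1 : r ^ (1:ℝ) ≤ r ^ p := Real.rpow_le_rpow_of_exponent_ge hr.1 hr.2.le h
    rw [Real.rpow_one] at h1
    have : 1 ≤ max 1 p := le_max_left _ _
    nlinarith
  · have h1 := one_add_mul_self_le_rpow_one_add (s := r - 1) (by linarith [hr.1]) h
    rw [show 1 + (r - 1) = r by ring] at h1
    have : p ≤ max 1 p := le_max_right _ _
    nlinarith

lemma step_ineq {p q : ℝ} {ω W V : ℝ → ℝ} (hp : 0 < p) (D : Dat q ω W V) {C : ℝ} (n : ℕ)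
    (hBA : momentW V (p * n + 1) ≤ C * momentW W (p * n + 1)) :
    momentW W (p * n + 1) - momentW W (p * (n + 1 : ℕ) + 1) ≤
      (max 1 p * (C + |q - 1|)) / (p * n + 1) * momentW W (p * n + 1) := by
  set x := p * n + 1 with hx
  have hx1 : 1 ≤ x := by
    have : 0 ≤ p * n := by positivity
    linarith
  have hx0 : 0 < x := by linarith
  obtain ⟨iV, eV⟩ := moment_tail D.Vm D.V0 D.Vi D.Vtm hx1
  obtain ⟨iW, eW⟩ := moment_tail D.Wm D.W0 D.Wi D.Wtm hx1
  have hA0 : 0 ≤ momentW W x := by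
    have := mom_lower D.Wm D.W0 D.Wi hx0.le (le_refl 0)
    rw [Real.zero_rpow hx0.ne'] at this
    linarith
  have ept : ∀ t ∈ Ioo (0:ℝ) 1, x * t ^ (x - 1) * tailInt V t + (q - 1) * (x * t ^ (x - 1) * tailInt W t)
      = x * (t ^ (x - 1) * (1 - t) * W t) := by
    intro t ht
    have := D.ident t ⟨ht.1.le, ht.2⟩
    rw [D.We]
    have e : (1 - t) ^ (q - 1) = (1 - t) ^ (q - 2) * (1 - t) := by
      rw [← Real.rpow_add_one (by linarith [ht.2])]; congr 1; ring
    rw [e] at this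
    linear_combination (x * t ^ (x - 1)) * this
  have hsum : momentW V x + (q - 1) * momentW W x =
      x * ∫ t in Ioo (0:ℝ) 1, t ^ (x - 1) * (1 - t) * W t := by
    rw [eV, eW, ← integral_const_mul, ← integral_const_mul, ← integral_add iV (iW.const_mul _)]
    exact setIntegral_congr_fun measurableSet_Ioo ept
  have iK : IntegrableOn (fun t => t ^ (x - 1) * (1 - t) * W t) (Ioo (0:ℝ) 1) := by
    have := ((iV.add (iW.const_mul (q - 1))).congr_fun ept measurableSet_Ioo).const_mul (x⁻¹)
    apply IntegrableOn.congr_fun this _ measurableSet_Ioo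
    intro t _
    field_simp
  have h1 : x * ∫ t in Ioo (0:ℝ) 1, t ^ (x - 1) * (1 - t) * W t ≤ (C + |q - 1|) * momentW W x := by
    rw [← hsum]
    nlinarith [le_abs_self (q - 1)]
  have h2 : momentW W x - momentW W (p * (n + 1 : ℕ) + 1) ≤
      max 1 p * ∫ t in Ioo (0:ℝ) 1, t ^ (x - 1) * (1 - t) * W t := by
    unfold momentW
    rw [← integral_const_mul, ← integral_sub (mom_int D.Wm D.Wi hx0.le)
      (mom_int D.Wm D.Wi (by positivity))]
    apply setIntegral_mono_on _ (iK.const_mul _) measurableSet_Ioo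
    · intro r hr
      have e1 : r ^ (p * (n + 1 : ℕ) + 1) = r ^ x * r ^ p := by
        rw [← Real.rpow_add hr.1]; congr 1; push_cast; rw [hx]; ring
      rw [e1]
      have a1 := one_sub_rpow_le hp hr
      have a2 : r ^ x ≤ r ^ (x - 1) := Real.rpow_le_rpow_of_exponent_ge hr.1 hr.2.le (by linarith)
      have a3 : 0 ≤ r ^ x := Real.rpow_nonneg hr.1.le _
      have a4 := D.W0 r hr.2
      have a5 : 0 ≤ 1 - r := by linarith [hr.2]
      calc r ^ x * W r - r ^ x * r ^ p * W r = r ^ x * (1 - r ^ p) * W r := by ring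
        _ ≤ r ^ x * (max 1 p * (1 - r)) * W r := by gcongr
        _ ≤ r ^ (x - 1) * (max 1 p * (1 - r)) * W r := by gcongr
        _ = _ := by ring
    · exact (mom_int D.Wm D.Wi hx0.le).sub (mom_int D.Wm D.Wi (by positivity))
  refine h2.trans ?_
  rw [div_mul_eq_mul_div, le_div_iff₀ hx0]
  have : 0 ≤ max 1 p := by positivity
  calc _ = max 1 p * (x * ∫ t in Ioo (0:ℝ) 1, t ^ (x - 1) * (1 - t) * W t) := by ring
    _ ≤ max 1 p * ((C + |q - 1|) * momentW W x) := by gcongr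
    _ = _ := by ring

lemma seq_doubling {a : ℕ → ℝ} {D p : ℝ} (hp : 0 < p) (hD : 0 ≤ D) (pos : ∀ n, 0 < a n)
    (anti : Antitone a) (h : ∀ n : ℕ, a n - a (n + 1) ≤ D / (p * n + 1) * a n) :
    ∃ K : ℝ, 1 ≤ K ∧ ∀ n, a n ≤ K * a (2 * n) := by
  obtain ⟨N, hN⟩ := exists_nat_ge (2 * D / p)
  have hN' : 2 * D ≤ p * N := by
    rw [div_le_iff₀ hp] at hN; linarith
  have step : ∀ n : ℕ, N ≤ n → a n ≤ Real.exp (2 * D / (p * n + 1)) * a (n + 1) := by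
    intro n hn
    have hn' : (N : ℝ) ≤ n := by exact_mod_cast hn
    have hx : 0 < p * n + 1 := by positivity
    have hy0 : 0 ≤ D / (p * n + 1) := by positivity
    have hy1 : D / (p * n + 1) ≤ 1 / 2 := by
      rw [div_le_iff₀ hx]; nlinarith
    have h1 := h n
    have e : 2 * D / (p * n + 1) = 2 * (D / (p * n + 1)) := by ring
    rw [e]
    generalize D / (p * n + 1) = y at *
    have h2 := Real.add_one_le_exp (2 * y)
    have h3 : (2 * y + 1) * a (n + 1) ≤ Real.exp (2 * y) * a (n + 1) :=
      mul_le_mul_of_nonneg_right h2 (pos _).le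
    have h4 : (2 * y + 1) * (a n * (1 - y)) ≤ (2 * y + 1) * a (n + 1) :=
      mul_le_mul_of_nonneg_left (by linarith) (by linarith)
    have h5 : 0 ≤ a n * (y * (1 - 2 * y)) :=
      mul_nonneg (pos n).le (mul_nonneg hy0 (by linarith))
    nlinarith
  have ind : ∀ n : ℕ, N ≤ n → ∀ k : ℕ, a n ≤ Real.exp (2 * D / (p * n + 1) * k) * a (n + k) := by
    intro n hn k
    induction k with
    | zero => simp
    | succ k ih =>
      have h1 := step (n + k) (by omega)
      have h2 : 2 * D / (p * (n + k : ℕ) + 1) ≤ 2 * D / (p * n + 1) := by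
        apply div_le_div_of_nonneg_left (by positivity) (by positivity)
        push_cast
        have : 0 ≤ p * k := by positivity
        nlinarith
      have h3 : a (n + k) ≤ Real.exp (2 * D / (p * n + 1)) * a (n + k + 1) :=
        h1.trans (mul_le_mul_of_nonneg_right (Real.exp_le_exp.mpr h2) (pos _).le)
      calc a n ≤ Real.exp (2 * D / (p * n + 1) * k) * a (n + k) := ih
        _ ≤ Real.exp (2 * D / (p * n + 1) * k) *
            (Real.exp (2 * D / (p * n + 1)) * a (n + k + 1)) := by gcongr
        _ = Real.exp (2 * D / (p * n + 1) * (k + 1 : ℕ)) * a (n + (k + 1)) := by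
          rw [← mul_assoc, ← Real.exp_add]
          push_cast
          rw [mul_add, mul_one]; rfl
  refine ⟨max (Real.exp (2 * D / p)) (a 0 / a (2 * N)), ?_, ?_⟩
  · apply le_max_of_le_left
    exact Real.one_le_exp (by positivity)
  intro n
  rcases le_total N n with hn | hn
  · have h1 := ind n hn n
    have h2 : 2 * D / (p * n + 1) * n ≤ 2 * D / p := by
      rw [div_mul_eq_mul_div, div_le_div_iff₀ (by positivity) hp]
      nlinarith
    rw [← two_mul] at h1
    refine h1.trans (mul_le_mul_of_nonneg_right ?_ (pos _).le)
    exact le_max_of_le_left (Real.exp_le_exp.mpr h2)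
  · calc a n ≤ a 0 := anti (Nat.zero_le _)
      _ = a 0 / a (2 * N) * a (2 * N) := by field_simp [(pos (2 * N)).ne']
      _ ≤ a 0 / a (2 * N) * a (2 * n) := by
        apply mul_le_mul_of_nonneg_left (anti (by omega))
        exact div_nonneg (pos _).le (pos _).le
      _ ≤ _ := by
        apply mul_le_mul_of_nonneg_right (le_max_right _ _) (pos _).le

/-- comparability of the tails -/
def TT (W V : ℝ → ℝ) : Prop := ∃ C : ℝ, 1 ≤ C ∧ ∀ s ∈ Ico (0:ℝ) 1,
  tailInt V s ≤ C * tailInt W s ∧ tailInt W s ≤ C * tailInt V s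

lemma mom_anti {w : ℝ → ℝ} (hw : Measurable w) (hw0 : ∀ r < 1, 0 ≤ w r)
    (hwi : IntegrableOn w (Ioo (0:ℝ) 1)) {x y : ℝ} (hx : 0 ≤ x) (hy : x ≤ y) :
    momentW w y ≤ momentW w x := by
  have := mom_upper hw hw0 hwi hx (y := y - x) (by linarith) (s := 1) zero_le_one
  simpa [tailInt] using this

/-- extend a tail comparison from `[1/2,1)` to `[0,1)` -/
lemma tail_extend {W V : ℝ → ℝ} (Wi : IntegrableOn W (Ioo (0:ℝ) 1)) (W0 : ∀ r < 1, 0 ≤ W r)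
    (Wpos : ∀ r ∈ Ico (0:ℝ) 1, 0 < tailInt W r)
    (Vi : IntegrableOn V (Ioo (0:ℝ) 1)) (V0 : ∀ r < 1, 0 ≤ V r)
    {C : ℝ} (h : ∀ s ∈ Ico (1/2:ℝ) 1, tailInt V s ≤ C * tailInt W s) :
    ∃ C' : ℝ, 1 ≤ C' ∧ ∀ s ∈ Ico (0:ℝ) 1, tailInt V s ≤ C' * tailInt W s := by
  have hh := Wpos (1/2) (by norm_num)
  refine ⟨max 1 (max C (tailInt V 0 / tailInt W (1/2))), le_max_left _ _, ?_⟩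
  intro s hs
  have ws := Wpos s hs
  rcases le_total (1/2) s with h1 | h1
  · refine (h s ⟨h1, hs.2⟩).trans (mul_le_mul_of_nonneg_right ?_ ws.le)
    exact le_max_of_le_right (le_max_left _ _)
  · calc tailInt V s ≤ tailInt V 0 := tail_anti Vi V0 le_rfl hs.1 hs.2.le
      _ = tailInt V 0 / tailInt W (1/2) * tailInt W (1/2) := by field_simp
      _ ≤ tailInt V 0 / tailInt W (1/2) * tailInt W s := by
        apply mul_le_mul_of_nonneg_left (tail_anti Wi W0 hs.1 h1 (by norm_num))
        exact div_nonneg (tail_nonneg V0 _) hh.le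
      _ ≤ _ := by
        apply mul_le_mul_of_nonneg_right _ ws.le
        exact le_max_of_le_right (le_max_right _ _)

lemma mom_to_TT {p q : ℝ} {ω W V : ℝ → ℝ} (hp : 0 < p) (D : Dat q ω W V) {C : ℝ} (hC : 1 ≤ C)
    (h1 : ∀ n : ℕ, momentW V (p * n + 1) ≤ C * momentW W (p * n + 1))
    (h2 : ∀ n : ℕ, momentW W (p * n + 1) ≤ C * momentW V (p * n + 1)) : TT W V := by
  have hx0 : ∀ n : ℕ, (0:ℝ) ≤ p * n + 1 := fun n => by positivity
  have pos : ∀ n : ℕ, 0 < momentW W (p * n + 1) := by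
    intro n
    refine lt_of_lt_of_le ?_ (mom_lower D.Wm D.W0 D.Wi (hx0 n) (s := 1/2) (by norm_num))
    exact mul_pos (by positivity) (D.Wpos _ (by norm_num))
  obtain ⟨K, hK, hd⟩ := seq_doubling (a := fun n : ℕ => momentW W (p * n + 1)) hp
    (D := max 1 p * (C + |q - 1|)) (by positivity) pos
    (by
      intro m n hmn
      apply mom_anti D.Wm D.W0 D.Wi (hx0 m)
      have : (m : ℝ) ≤ n := by exact_mod_cast hmn
      nlinarith)
    (fun n => step_ineq hp D n (h1 n))
  have hdk : ∀ k n : ℕ, momentW W (p * n + 1) ≤ K ^ k * momentW W (p * (2 ^ k * n : ℕ) + 1) := by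
    intro k n
    induction k with
    | zero => simp
    | succ k ih =>
      refine ih.trans ?_
      rw [pow_succ K, mul_assoc]
      apply mul_le_mul_of_nonneg_left _ (by positivity)
      refine (hd _).trans (le_of_eq ?_)
      congr 4
      ring
  -- choose k
  obtain ⟨k, hk⟩ : ∃ k : ℕ, K ^ k * C ^ 2 * Real.exp (-(p * (2 ^ k - 1))) ≤ 1 / 2 := by
    have ht : Filter.Tendsto (fun k : ℕ => C ^ 2 * Real.exp p * (((2:ℝ) ^ k) ^ (Real.logb 2 K) *
        Real.exp (-p * (2:ℝ) ^ k))) Filter.atTop (nhds (C ^ 2 * Real.exp p * 0)) := by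
      apply Filter.Tendsto.const_mul
      exact (tendsto_rpow_mul_exp_neg_mul_atTop_nhds_zero (Real.logb 2 K) p hp).comp
        (tendsto_pow_atTop_atTop_of_one_lt (by norm_num))
    rw [mul_zero] at ht
    obtain ⟨k, hk⟩ := (ht.eventually_le_const (u := 1/2) (by norm_num)).exists
    refine ⟨k, le_trans (le_of_eq ?_) hk⟩
    have e : ((2:ℝ) ^ k) ^ (Real.logb 2 K) = K ^ k := by
      rw [← Real.rpow_natCast, ← Real.rpow_mul (by norm_num), mul_comm,
        Real.rpow_mul (by norm_num), Real.rpow_logb (by norm_num) (by norm_num) (by linarith),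
        Real.rpow_natCast]
    rw [e, show -(p * ((2:ℝ) ^ k - 1)) = p + -p * (2:ℝ) ^ k by ring, Real.exp_add]
    ring
  set c := Real.exp (-4 * p) / 2 with hc
  have hcpos : 0 < c := by positivity
  have key : ∀ s ∈ Ico (1/2:ℝ) 1, ∃ n : ℕ, c ≤ s ^ (p * n + 1) ∧
      s ^ (p * ((2 ^ k - 1) * n)) ≤ Real.exp (-(p * (2 ^ k - 1))) := by
    intro s hs
    have hs0 : 0 < s := by linarith [hs.1]
    have h1s : 0 < 1 - s := by linarith [hs.2]
    refine ⟨⌈1 / (1 - s)⌉₊, ?_, ?_⟩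
    · have hn := (Nat.ceil_lt_add_one (a := 1 / (1 - s)) (by positivity)).le
      set n : ℝ := (⌈1 / (1 - s)⌉₊ : ℝ)
      have hn2 : n * (1 - s) ≤ 2 := by
        have : (1 / (1 - s) + 1) * (1 - s) = 1 + (1 - s) := by field_simp
        nlinarith [hs.1]
      rw [Real.rpow_add hs0, Real.rpow_one, hc, div_eq_mul_one_div]
      apply mul_le_mul _ hs.1 (by norm_num) (by positivity)
      rw [Real.rpow_def_of_pos hs0, Real.exp_le_exp]
      have hl : -2 * (1 - s) ≤ Real.log s := by
        have h3 := Real.one_sub_inv_le_log_of_pos hs0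
        have h4 : -2 * (1 - s) ≤ 1 - s⁻¹ := by
          have : 1 - s⁻¹ = -((1 - s) * s⁻¹) := by field_simp; ring
          rw [this]
          have : s⁻¹ ≤ 2 := by
            rw [inv_le_comm₀ hs0 (by norm_num)]; linarith [hs.1]
          nlinarith
        linarith
      have hn0 : 0 ≤ p * n := by positivity
      nlinarith
    · have hn := Nat.le_ceil (1 / (1 - s))
      set n : ℝ := (⌈1 / (1 - s)⌉₊ : ℝ)
      rw [div_le_iff₀ h1s] at hn
      rw [Real.rpow_def_of_pos hs0, Real.exp_le_exp]
      have hl := Real.log_le_sub_one_of_pos hs0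
      have h2k : (0:ℝ) ≤ 2 ^ k - 1 := by
        linarith [one_le_pow₀ (M₀ := ℝ) (a := 2) (by norm_num) (n := k)]
      have hn0 : 0 ≤ n := by positivity
      have h5 : Real.log s * n ≤ -1 := by nlinarith
      have h6 : 0 ≤ p * (2 ^ k - 1) := by positivity
      calc Real.log s * (p * ((2 ^ k - 1) * n)) = (p * (2 ^ k - 1)) * (Real.log s * n) := by ring
        _ ≤ (p * (2 ^ k - 1)) * (-1) := mul_le_mul_of_nonneg_left h5 h6
        _ = _ := by ring
  have h2k : (0:ℝ) ≤ 2 ^ k - 1 := by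
    linarith [one_le_pow₀ (M₀ := ℝ) (a := 2) (by norm_num) (n := k)]
  have hK0 : 0 < K := by linarith
  have hKk : 0 < K ^ k := by positivity
  have both : ∀ s ∈ Ico (1/2:ℝ) 1, tailInt V s ≤ (2 * K ^ k * C / c) * tailInt W s ∧
      tailInt W s ≤ (2 * K ^ k * C / c) * tailInt V s := by
    intro s hs
    have hs0 : 0 ≤ s := by linarith [hs.1]
    obtain ⟨n, hn1, hn2⟩ := key s hs
    have ex : p * (2 ^ k * n : ℕ) + 1 = (p * n + 1) + p * ((2 ^ k - 1) * n) := by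
      push_cast; ring
    have uW := mom_upper D.Wm D.W0 D.Wi (hx0 n) (y := p * ((2 ^ k - 1) * n)) (by positivity) hs0
    have uV := mom_upper D.Vm D.V0 D.Vi (hx0 n) (y := p * ((2 ^ k - 1) * n)) (by positivity) hs0
    have lW := mom_lower D.Wm D.W0 D.Wi (hx0 n) hs0
    have lV := mom_lower D.Vm D.V0 D.Vi (hx0 n) hs0
    have dk := hdk k n
    have h1n := h1 n
    have h2n := h2 (2 ^ k * n)
    rw [ex] at dk h2n
    have tW := tail_nonneg D.W0 s
    have tV := tail_nonneg D.V0 s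
    have pn := pos n
    set E := Real.exp (-(p * (2 ^ k - 1)))
    have hE : 0 < E := Real.exp_pos _
    generalize momentW W (p * n + 1 + p * ((2 ^ k - 1) * n)) = A2 at *
    generalize momentW V (p * n + 1 + p * ((2 ^ k - 1) * n)) = B2 at *
    generalize momentW W (p * n + 1) = A at *
    generalize momentW V (p * n + 1) = B at *
    generalize s ^ (p * ((2 ^ k - 1) * n)) = y at *
    have lW' : c * tailInt W s ≤ A := (mul_le_mul_of_nonneg_right hn1 tW).trans lW
    have lV' : c * tailInt V s ≤ B := (mul_le_mul_of_nonneg_right hn1 tV).trans lV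
    have hB0 : 0 ≤ B := (mul_nonneg hcpos.le tV).trans lV'
    constructor
    · have e1 : A ≤ K ^ k * (tailInt W s + E * A) :=
        dk.trans (mul_le_mul_of_nonneg_left
          (uW.trans (by gcongr)) hKk.le)
      have e2 : K ^ k * E * A ≤ 1 / 2 * A := by
        apply mul_le_mul_of_nonneg_right _ pn.le
        refine le_trans ?_ hk
        have : (1:ℝ) ≤ C ^ 2 := one_le_pow₀ hC
        have h0 : 0 < K ^ k * E := by positivity
        nlinarith
      have e3 : A ≤ 2 * K ^ k * tailInt W s := by nlinarith
      have e4 : c * tailInt V s ≤ C * (2 * K ^ k * tailInt W s) :=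
        lV'.trans (h1n.trans (mul_le_mul_of_nonneg_left e3 (by linarith)))
      rw [div_mul_eq_mul_div, le_div_iff₀ hcpos]
      linarith
    · have e1 : A ≤ K ^ k * (C * (tailInt V s + E * (C * A))) := by
        refine dk.trans (mul_le_mul_of_nonneg_left (h2n.trans ?_) hKk.le)
        apply mul_le_mul_of_nonneg_left _ (by linarith)
        refine uV.trans (add_le_add le_rfl ?_)
        exact mul_le_mul hn2 h1n hB0 hE.le
      have e2 : K ^ k * C ^ 2 * E * A ≤ 1 / 2 * A := mul_le_mul_of_nonneg_right hk pn.le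
      have e3 : A ≤ 2 * K ^ k * C * tailInt V s := by nlinarith
      rw [div_mul_eq_mul_div, le_div_iff₀ hcpos]
      linarith
  obtain ⟨C1, hC1, H1⟩ := tail_extend D.Wi D.W0 D.Wpos D.Vi D.V0 (fun s hs => (both s hs).1)
  have Vpos : ∀ r ∈ Ico (0:ℝ) 1, 0 < tailInt V r := by
    intro r hr
    by_contra hcon
    have hz : tailInt V r = 0 := le_antisymm (not_lt.mp hcon) (tail_nonneg D.V0 r)
    have hm : max r (1/2) ∈ Ico (1/2:ℝ) 1 := ⟨le_max_right _ _, max_lt hr.2 (by norm_num)⟩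
    have h3 := (both _ hm).2
    have h4 := tail_anti D.Vi D.V0 hr.1 (le_max_left r (1/2)) hm.2.le
    have h5 := D.Wpos _ ⟨hr.1.trans (le_max_left r (1/2)), hm.2⟩
    have h6 : tailInt V (max r (1/2)) = 0 := le_antisymm (by linarith) (tail_nonneg D.V0 _)
    rw [h6, mul_zero] at h3
    linarith
  obtain ⟨C2, hC2, H2⟩ := tail_extend D.Vi D.V0 Vpos D.Wi D.W0 (fun s hs => (both s hs).2)
  refine ⟨max C1 C2, le_max_of_le_left hC1, fun s hs => ⟨(H1 s hs).trans ?_, (H2 s hs).trans ?_⟩⟩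
  · exact mul_le_mul_of_nonneg_right (le_max_left _ _) (tail_nonneg D.W0 _)
  · exact mul_le_mul_of_nonneg_right (le_max_right _ _) (tail_nonneg D.V0 _)

/-- norm comparison -/
def NC (p q : ℝ) (ω : ℝ → ℝ) : Prop :=
  ∃ C : ℝ, 1 ≤ C ∧ ∀ f : ℂ → ℂ, DifferentiableOn ℂ f (ball (0:ℂ) 1) →
          (1 / C) * Apq p (q - 1) ω f ≤ Apq p (q - 2) (tailInt ω) f ∧
          Apq p (q - 2) (tailInt ω) f ≤ C * Apq p (q - 1) ω f

lemma NC_of_TT {p q : ℝ} {ω : ℝ → ℝ} (hp : 0 < p)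
    (D : Dat q ω (fun t => tailInt ω t * (1 - t) ^ (q - 2)) (fun t => ω t * (1 - t) ^ (q - 1)))
    (T : TT (fun t => tailInt ω t * (1 - t) ^ (q - 2)) (fun t => ω t * (1 - t) ^ (q - 1))) :
    NC p q ω := by
  obtain ⟨C, hC, hT⟩ := T
  refine ⟨C, hC, fun f hf => ?_⟩
  have hC0 : 0 < C := by linarith
  rw [Apq_eq hp _ hf D.ωm (fun r hr => D.ω0 r hr.2),
    Apq_eq hp _ hf (tailInt_measurable D.ωm D.ω0) (fun r _ => tail_nonneg D.ω0 r)]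
  have hG0 : ∀ r ∈ Ioo (0:ℝ) 1, 0 ≤ r * Hmean p f r :=
    fun r hr => mul_nonneg hr.1.le (Hmean_nonneg _ _ _)
  have hG : MonotoneOn (fun r : ℝ => r * Hmean p f r) (Ioo (0:ℝ) 1) := by
    intro r hr R hR hrR
    exact mul_le_mul hrR (Hmean_mono hp hf hr.1.le hrR hR.2) (Hmean_nonneg _ _ _) hR.1.le
  have c1 := mono_compare hG hG0 D.Wm D.Vm (C := ENNReal.ofReal C) ENNReal.ofReal_ne_top (by
    intro s hs
    rw [tail_ofReal D.Vi D.V0 hs.1, tail_ofReal D.Wi D.W0 hs.1, ← ENNReal.ofReal_mul hC0.le]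
    exact ENNReal.ofReal_le_ofReal (hT s hs).1)
  have c2 := mono_compare hG hG0 D.Vm D.Wm (C := ENNReal.ofReal C) ENNReal.ofReal_ne_top (by
    intro s hs
    rw [tail_ofReal D.Vi D.V0 hs.1, tail_ofReal D.Wi D.W0 hs.1, ← ENNReal.ofReal_mul hC0.le]
    exact ENNReal.ofReal_le_ofReal (hT s hs).2)
  generalize (∫⁻ r in Ioo (0:ℝ) 1, ENNReal.ofReal (r * Hmean p f r) *
      ENNReal.ofReal (tailInt ω r * (1 - r) ^ (q - 2))) = X at *
  generalize (∫⁻ r in Ioo (0:ℝ) 1, ENNReal.ofReal (r * Hmean p f r) *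
      ENNReal.ofReal (ω r * (1 - r) ^ (q - 1))) = Y at *
  have conv : ∀ X Y : ℝ≥0∞, Y ≤ ENNReal.ofReal C * X → X ≤ ENNReal.ofReal C * Y →
      Y.toReal ≤ C * X.toReal := by
    intro X Y h1 h2
    by_cases hX : X = ⊤
    · have : Y = ⊤ := by
        by_contra hY
        rw [hX, top_le_iff] at h2
        exact ENNReal.mul_ne_top ENNReal.ofReal_ne_top hY h2
      simp [hX, this]
    · have := ENNReal.toReal_mono (ENNReal.mul_ne_top ENNReal.ofReal_ne_top hX) h1
      rwa [ENNReal.toReal_mul, ENNReal.toReal_ofReal hC0.le] at this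
  refine ⟨?_, conv _ _ c2 c1⟩
  rw [one_div, inv_mul_le_iff₀ hC0]
  exact conv _ _ c1 c2

lemma Apq_monomial {p x : ℝ} (hp : 0 < p) (n : ℕ) {w : ℝ → ℝ} (hw : Measurable w)
    (hw0 : ∀ r ∈ Ico (0:ℝ) 1, 0 ≤ w r) :
    Apq p x w (fun z => z ^ n) = 2 * π * momentW (fun t => w t * (1 - t) ^ x) (p * n + 1) := by
  rw [Apq_eq hp x (by fun_prop) hw hw0]
  have hm : Measurable (fun t => w t * (1 - t) ^ x) := by fun_prop
  unfold momentW
  rw [← integral_const_mul, integral_eq_lintegral_of_nonneg_ae]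
  · congr 1
    apply setLIntegral_congr_fun measurableSet_Ioo
    intro r hr
    have hr0 : 0 ≤ r := hr.1.le
    have e : Hmean p (fun z => z ^ n) r = 2 * π * r ^ (p * n) := by
      unfold Hmean
      have : ∀ φ : ℝ, ‖(Complex.exp ((φ : ℂ) * Complex.I) * (r : ℂ)) ^ n‖ ^ p = r ^ (p * n) := by
        intro φ
        rw [norm_pow, norm_mul, norm_expI, one_mul, Complex.norm_real, Real.norm_of_nonneg hr0,
          ← Real.rpow_natCast, ← Real.rpow_mul hr0, mul_comm]
      simp only [this]
      rw [intervalIntegral.integral_const, smul_eq_mul, sub_zero]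
    simp only
    rw [e, ← ENNReal.ofReal_mul (by positivity), Real.rpow_add hr.1, Real.rpow_one]
    congr 1
    ring
  · filter_upwards [ae_restrict_mem measurableSet_Ioo] with r hr
    have h1 := hw0 r ⟨hr.1.le, hr.2⟩
    have h2 : 0 ≤ (1 - r) ^ x := Real.rpow_nonneg (by linarith [hr.2]) _
    have h3 := hr.1.le
    simp only [Pi.zero_apply]
    positivity
  · apply Measurable.aestronglyMeasurable; fun_prop

lemma NC_iff_TT {p q : ℝ} {ω : ℝ → ℝ} (hp : 0 < p)
    (D : Dat q ω (fun t => tailInt ω t * (1 - t) ^ (q - 2)) (fun t => ω t * (1 - t) ^ (q - 1))) :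
    NC p q ω ↔
    TT (fun t => tailInt ω t * (1 - t) ^ (q - 2)) (fun t => ω t * (1 - t) ^ (q - 1)) := by
  refine ⟨?_, NC_of_TT hp D⟩
  rintro ⟨C, hC, h⟩
  have hC0 : 0 < C := by linarith
  have hh : ∀ n : ℕ, _ := fun n => h (fun z => z ^ n) (by fun_prop)
  have hpi := Real.pi_pos
  apply mom_to_TT hp D hC
  · intro n
    have := (hh n).1
    rw [Apq_monomial hp n D.ωm (fun r hr => D.ω0 r hr.2),
      Apq_monomial hp n (tailInt_measurable D.ωm D.ω0) (fun r _ => tail_nonneg D.ω0 r),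
      one_div, inv_mul_le_iff₀ hC0] at this
    have h2 : (0:ℝ) < 2 * π := by positivity
    rw [mul_left_comm, mul_le_mul_iff_right₀ h2] at this
    exact this
  · intro n
    have := (hh n).2
    rw [Apq_monomial hp n D.ωm (fun r hr => D.ω0 r hr.2),
      Apq_monomial hp n (tailInt_measurable D.ωm D.ω0) (fun r _ => tail_nonneg D.ω0 r)] at this
    have h2 : (0:ℝ) < 2 * π := by positivity
    rw [mul_left_comm, mul_le_mul_iff_right₀ h2] at this
    exact this

section cls
variable {q : ℝ} {ω W V : ℝ → ℝ}

lemma Dat.W_eq (D : Dat q ω W V) {r : ℝ} (hr : r < 1) :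
    W r = tailInt ω r * (1 - r) ^ (q - 1) / (1 - r) := by
  rw [D.We, show q - 2 = (q - 1) - 1 by ring, Real.rpow_sub_one (by linarith), mul_div_assoc]

lemma h_le_of_TT (D : Dat q ω W V) (T : TT W V) : ∃ C : ℝ, 1 ≤ C ∧ ∀ s ∈ Ico (0:ℝ) 1,
    tailInt ω s * (1 - s) ^ (q - 1) ≤ C * tailInt W s := by
  obtain ⟨C, hC, h⟩ := T
  refine ⟨C + |q - 1|, by linarith [abs_nonneg (q - 1)], fun s hs => ?_⟩
  rw [← D.ident s hs, add_mul]
  have := D.Wpos s hs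
  have := mul_le_mul_of_nonneg_right (le_abs_self (q - 1)) this.le
  linarith [(h s hs).1]

lemma Dhat_of_h_le (D : Dat q ω W V) {C : ℝ} (hC : 1 ≤ C) (h : ∀ s ∈ Ico (0:ℝ) 1,
    tailInt ω s * (1 - s) ^ (q - 1) ≤ C * tailInt W s) : Dhat W := by
  set K : ℝ := 1 + 1 / (2 * C) with hK
  have hC0 : 0 < C := by linarith
  have hK1 : 1 < K := by rw [hK]; linarith [show 0 < 1 / (2 * C) by positivity]
  have hK0 : 0 < K := by linarith
  have hmem : ∀ s ∈ Ico (0:ℝ) 1, 1 - (1 - s) / K ∈ Ico (0:ℝ) 1 ∧ s ≤ 1 - (1 - s) / K := by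
    intro s hs
    have h1 : 0 < 1 - s := by linarith [hs.2]
    have h2 : (1 - s) / K ≤ 1 - s := div_le_self h1.le hK1.le
    have h3 : 0 < (1 - s) / K := by positivity
    refine ⟨⟨by linarith [hs.1], by linarith⟩, by linarith⟩
  have step : ∀ s ∈ Ico (0:ℝ) 1, tailInt W s ≤ 2 * tailInt W (1 - (1 - s) / K) := by
    intro s hs
    obtain ⟨hm, hle⟩ := hmem s hs
    have h1 : 0 < 1 - s := by linarith [hs.2]
    have := tail_le D.Wi hs.1 hle hm.2.le (M := C * tailInt W s / ((1 - s) / K)) (by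
      intro r hr
      have hr1 : r < 1 := hr.2.trans hm.2
      have hr0 : 0 ≤ r := hs.1.trans hr.1.le
      rw [D.W_eq hr1]
      apply div_le_div₀ (by have := D.Wpos s hs; positivity) _ (by positivity) (by linarith [hr.2])
      refine (h r ⟨hr0, hr1⟩).trans (mul_le_mul_of_nonneg_left ?_ hC0.le)
      exact tail_anti D.Wi D.W0 hs.1 hr.1.le hr1.le)
    have e : C * tailInt W s / ((1 - s) / K) * (1 - (1 - s) / K - s) = tailInt W s / 2 := by
      have e1 : 1 - (1 - s) / K - s = (1 - s) / K * (K - 1) := by field_simp; ring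
      have e2 : K - 1 = 1 / (2 * C) := by rw [hK]; ring
      rw [e1, e2]
      field_simp
    rw [e] at this
    linarith
  have it : ∀ j : ℕ, ∀ s ∈ Ico (0:ℝ) 1, tailInt W s ≤ 2 ^ j * tailInt W (1 - (1 - s) / K ^ j) := by
    intro j
    induction j with
    | zero => intro s _; simp
    | succ j ih =>
      intro s hs
      have h1 := ih _ (hmem s hs).1
      have h2 := step s hs
      rw [show 1 - (1 - (1 - s) / K) = (1 - s) / K by ring, div_div, ← pow_succ'] at h1
      rw [pow_succ']
      linarith
  obtain ⟨j, hj⟩ := pow_unbounded_of_one_lt 2 hK1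
  refine ⟨2 ^ (j + 1), one_lt_pow₀ (by norm_num) (by omega), fun s hs => ?_⟩
  have h1 : 0 < 1 - s := by linarith [hs.2]
  have hw : 0 ≤ tailInt W ((1 + s) / 2) := tail_nonneg D.W0 _
  have h3 : (1 - s) / K ^ j ≤ (1 - s) / 2 := by
    apply div_le_div_of_nonneg_left h1.le (by norm_num) hj.le
  have h4 : 0 < (1 - s) / K ^ j := by positivity
  calc tailInt W s ≤ 2 ^ j * tailInt W (1 - (1 - s) / K ^ j) := it j s hs
    _ ≤ 2 ^ j * tailInt W ((1 + s) / 2) := by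
      apply mul_le_mul_of_nonneg_left _ (by positivity)
      apply tail_anti D.Wi D.W0 (by linarith [hs.1]) (by linarith) (by linarith)
    _ ≤ 2 ^ (j + 1) * tailInt W ((1 + s) / 2) := by
      apply mul_le_mul_of_nonneg_right _ hw
      exact pow_le_pow_right₀ (by norm_num) (by omega)

lemma h_le_of_Dhat (hq : q ≤ 1) (D : Dat q ω W V) (H : Dhat W) : ∃ C : ℝ, 1 ≤ C ∧
    ∀ s ∈ Ico (0:ℝ) 1, tailInt ω s * (1 - s) ^ (q - 1) ≤ C * tailInt W s := by
  obtain ⟨C, hC, h⟩ := H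
  have hh := D.Wpos (1/2) (by norm_num)
  have hc2 : (0:ℝ) < 2 ^ (q - 2) := by positivity
  set C2 := tailInt ω 0 * (1/2) ^ (q - 1) / tailInt W (1/2) with hC2
  refine ⟨max 1 (max (C / 2 ^ (q - 2)) C2), le_max_left _ _, fun s hs => ?_⟩
  have ws := D.Wpos s hs
  have h1 : 0 < 1 - s := by linarith [hs.2]
  rcases le_total (1/2) s with h2 | h2
  · have hs' := h (2 * s - 1) ⟨by linarith, by linarith [hs.2]⟩
    rw [show (1 + (2 * s - 1)) / 2 = s by ring] at hs'
    have := tail_ge D.Wi (a := 2 * s - 1) (b := s) (by linarith) (by linarith) hs.2.le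
      (M := tailInt ω s * (2 * (1 - s)) ^ (q - 2)) (by
        intro r hr
        have hr1 : r < 1 := hr.2.trans hs.2
        rw [D.We]
        apply mul_le_mul (tail_anti D.ωi D.ω0 (by linarith [hr.1]) hr.2.le hs.2.le) _
          (Real.rpow_nonneg (by linarith) _) (tail_nonneg D.ω0 _)
        exact Real.rpow_le_rpow_of_nonpos (by linarith) (by linarith [hr.1]) (by linarith))
    have e : tailInt ω s * (2 * (1 - s)) ^ (q - 2) * (s - (2 * s - 1)) =
        2 ^ (q - 2) * (tailInt ω s * (1 - s) ^ (q - 1)) := by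
      rw [Real.mul_rpow (by norm_num) h1.le, show q - 1 = (q - 2) + 1 by ring,
        Real.rpow_add_one h1.ne']
      ring
    rw [e] at this
    have h3 : tailInt ω s * (1 - s) ^ (q - 1) ≤ C / 2 ^ (q - 2) * tailInt W s := by
      rw [div_mul_eq_mul_div, le_div_iff₀ hc2]
      linarith
    refine h3.trans (mul_le_mul_of_nonneg_right ?_ ws.le)
    exact le_max_of_le_right (le_max_left _ _)
  · have h3 : tailInt ω s * (1 - s) ^ (q - 1) ≤ tailInt ω 0 * (1/2) ^ (q - 1) := by
      apply mul_le_mul (tail_anti D.ωi D.ω0 le_rfl hs.1 hs.2.le) _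
        (Real.rpow_nonneg h1.le _) (tail_nonneg D.ω0 _)
      exact Real.rpow_le_rpow_of_nonpos (by norm_num) (by linarith) (by linarith)
    have hC20 : 0 ≤ C2 := div_nonneg (mul_nonneg (tail_nonneg D.ω0 _) (by positivity)) hh.le
    calc _ ≤ tailInt ω 0 * (1/2) ^ (q - 1) := h3
      _ = C2 * tailInt W (1/2) := by rw [hC2]; field_simp
      _ ≤ C2 * tailInt W s :=
        mul_le_mul_of_nonneg_left (tail_anti D.Wi D.W0 hs.1 h2 (by norm_num)) hC20
      _ ≤ _ := by
        apply mul_le_mul_of_nonneg_right _ ws.le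
        exact le_max_of_le_right (le_max_right _ _)

lemma case_lt (hq : q < 1) (D : Dat q ω W V) : TT W V ↔ Dhat W := by
  constructor
  · intro T
    obtain ⟨C, hC, h⟩ := h_le_of_TT D T
    exact Dhat_of_h_le D hC h
  · intro H
    obtain ⟨C, hC, h⟩ := h_le_of_Dhat hq.le D H
    have hq' : 0 < 1 - q := by linarith
    refine ⟨max (C + (1 - q)) (1 / (1 - q)), le_max_of_le_left (by linarith), fun s hs => ?_⟩
    have hi := D.ident s hs
    have hb := tail_nonneg D.V0 s
    have ws := D.Wpos s hs
    have hh : 0 ≤ tailInt ω s * (1 - s) ^ (q - 1) :=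
      mul_nonneg (tail_nonneg D.ω0 _) (Real.rpow_nonneg (by linarith [hs.2]) _)
    constructor
    · calc tailInt V s ≤ (C + (1 - q)) * tailInt W s := by linarith [h s hs]
        _ ≤ _ := mul_le_mul_of_nonneg_right (le_max_left _ _) ws.le
    · calc tailInt W s ≤ 1 / (1 - q) * tailInt V s := by
            rw [div_mul_eq_mul_div, le_div_iff₀ hq']; linarith
        _ ≤ _ := mul_le_mul_of_nonneg_right (le_max_right _ _) hb

lemma case_eq (hq : q = 1) (D : Dat q ω W V) : TT W V ↔ Dclass W := by
  have hbe : ∀ s ∈ Ico (0:ℝ) 1, tailInt V s = tailInt ω s := by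
    intro s hs
    have := D.ident s hs
    simpa [hq] using this
  have hWe : ∀ r < 1, W r = tailInt ω r / (1 - r) := by
    intro r hr
    rw [D.W_eq hr]; simp [hq]
  constructor
  · intro T
    obtain ⟨C', hC', h'⟩ := h_le_of_TT D T
    refine ⟨Dhat_of_h_le D hC' h', ?_⟩
    obtain ⟨C, hC, h⟩ := T
    have hC0 : 0 < C := by linarith
    refine ⟨2, by norm_num, 1 + 1 / (2 * C), ?_, fun r hr => ?_⟩
    · linarith [show 0 < 1 / (2 * C) by positivity]
    · have h1 : 0 < 1 - r := by linarith [hr.2]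
      set b := 1 - (1 - r) / 2 with hb
      have hbm : b ∈ Ico (0:ℝ) 1 := ⟨by linarith [hr.1], by linarith⟩
      have hrb : r ≤ b := by linarith
      have := tail_ge D.Wi hr.1 hrb hbm.2.le (M := tailInt ω b / (1 - r)) (by
        intro t ht
        have ht1 := ht.2.trans hbm.2
        rw [hWe t ht1]
        apply div_le_div₀ (tail_nonneg D.ω0 _)
          (tail_anti D.ωi D.ω0 (hr.1.trans ht.1.le) ht.2.le hbm.2.le) (by linarith)
          (by linarith [ht.1]))
      have e : tailInt ω b / (1 - r) * (b - r) = tailInt ω b / 2 := by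
        rw [show b - r = (1 - r) / 2 by rw [hb]; ring]; field_simp
      rw [e, ← hbe b hbm] at this
      have h2 := (h b hbm).2
      have h3 : 1 / (2 * C) * tailInt W b ≤ tailInt V b / 2 := by
        rw [div_mul_eq_mul_div, div_le_div_iff₀ (by positivity) (by norm_num)]
        linarith
      linarith
  · rintro ⟨H1, K, hK, C2, hC2, H2⟩
    obtain ⟨C, hC, h⟩ := h_le_of_Dhat hq.le D H1
    have hd : 0 < 1 - 1 / C2 := by
      have : 1 / C2 < 1 := by rw [div_lt_one (by linarith)]; exact hC2
      linarith
    refine ⟨max C ((K - 1) / (1 - 1 / C2)), le_max_of_le_left hC, fun s hs => ⟨?_, ?_⟩⟩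
    · have h1 := h s hs
      simp only [hq, sub_self, Real.rpow_zero, mul_one] at h1
      rw [hbe s hs]
      exact h1.trans (mul_le_mul_of_nonneg_right (le_max_left _ _) (D.Wpos s hs).le)
    · refine le_trans ?_ (mul_le_mul_of_nonneg_right (le_max_right _ _) (tail_nonneg D.V0 _))
      rw [hbe s hs]
      have h1 : 0 < 1 - s := by linarith [hs.2]
      have hK0 : 0 < K := by linarith
      have h2 : (1 - s) / K ≤ 1 - s := div_le_self h1.le hK.le
      have h3 : 0 < (1 - s) / K := by positivity
      have hH := H2 s hs
      set b := 1 - (1 - s) / K with hb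
      have := tail_le D.Wi hs.1 (b := b) (by linarith) (by linarith)
        (M := tailInt ω s / ((1 - s) / K)) (by
        intro t ht
        have ht1 : t < 1 := by linarith [ht.2]
        rw [hWe t ht1]
        apply div_le_div₀ (tail_nonneg D.ω0 _)
          (tail_anti D.ωi D.ω0 hs.1 ht.1.le ht1.le) h3
          (by linarith [ht.2]))
      have e : tailInt ω s / ((1 - s) / K) * (b - s) = (K - 1) * tailInt ω s := by
        rw [show b - s = (1 - s) / K * (K - 1) by rw [hb]; field_simp; ring]
        field_simp
      rw [e] at this
      have h5 : tailInt W b ≤ 1 / C2 * tailInt W s := by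
        rw [div_mul_eq_mul_div, le_div_iff₀ (by linarith)]; linarith
      rw [div_mul_eq_mul_div, le_div_iff₀ hd]
      linarith

lemma V_upper (hq : 1 < q) (D : Dat q ω W V) {a b : ℝ} (ha : 0 ≤ a) (hab : a ≤ b) (hb : b ≤ 1) :
    tailInt V a ≤ (1 - a) ^ (q - 1) * (tailInt ω a - tailInt ω b) + tailInt V b := by
  rw [tail_split D.Vi ha hab hb, tail_split D.ωi ha hab hb, add_sub_cancel_right,
    ← intervalIntegral.integral_const_mul]
  have := intervalIntegral.integral_mono_on_of_le_Ioo hab (intervalIntegrable_of D.Vi ha hab hb)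
    ((intervalIntegrable_of D.ωi ha hab hb).const_mul ((1 - a) ^ (q - 1))) (by
      intro r hr
      rw [D.Ve, mul_comm]
      apply mul_le_mul_of_nonneg_right _ (D.ω0 r (by linarith [hr.2]))
      exact Real.rpow_le_rpow (by linarith [hr.2]) (by linarith [hr.1]) (by linarith))
  linarith

lemma V_lower (hq : 1 < q) (D : Dat q ω W V) {a b : ℝ} (ha : 0 ≤ a) (hab : a ≤ b) (hb : b ≤ 1) :
    (1 - b) ^ (q - 1) * (tailInt ω a - tailInt ω b) ≤ tailInt V a := by
  have hn := tail_nonneg D.V0 b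
  rw [tail_split D.Vi ha hab hb, tail_split D.ωi ha hab hb, add_sub_cancel_right,
    ← intervalIntegral.integral_const_mul]
  have := intervalIntegral.integral_mono_on_of_le_Ioo hab
    ((intervalIntegrable_of D.ωi ha hab hb).const_mul ((1 - b) ^ (q - 1)))
    (intervalIntegrable_of D.Vi ha hab hb) (by
      intro r hr
      rw [D.Ve, mul_comm (ω r)]
      apply mul_le_mul_of_nonneg_right _ (D.ω0 r (by linarith [hr.2]))
      exact Real.rpow_le_rpow (by linarith [hr.2]) (by linarith [hr.2]) (by linarith))
  linarith

lemma case_gt (hq : 1 < q) (D : Dat q ω W V) : TT W V ↔ Dclass ω := by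
  have hq' : 0 < q - 1 := by linarith
  have hbh : ∀ s ∈ Ico (0:ℝ) 1, tailInt V s ≤ tailInt ω s * (1 - s) ^ (q - 1) := by
    intro s hs
    have := D.ident s hs
    have := mul_nonneg hq'.le (D.Wpos s hs).le
    linarith
  have hmh : ∀ s ∈ Ico (0:ℝ) 1, (q - 1) * tailInt W s ≤ tailInt ω s * (1 - s) ^ (q - 1) := by
    intro s hs
    have := D.ident s hs
    linarith [tail_nonneg D.V0 s]
  constructor
  · intro T
    obtain ⟨C', hC', h'⟩ := h_le_of_TT D T
    obtain ⟨A, hA, hd⟩ := Dhat_of_h_le D hC' h'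
    obtain ⟨C, hC, h⟩ := T
    have hC0 : 0 < C := by linarith
    constructor
    · refine ⟨max 2 (C' * A / (q - 1)), lt_max_of_lt_left (by norm_num), fun s hs => ?_⟩
      refine le_trans ?_ (mul_le_mul_of_nonneg_right (le_max_right _ _) (tail_nonneg D.ω0 _))
      have h1 : 0 < 1 - s := by linarith [hs.2]
      have hm : (1 + s) / 2 ∈ Ico (0:ℝ) 1 := ⟨by linarith [hs.1], by linarith⟩
      have hx : 0 < (1 - s) ^ (q - 1) := Real.rpow_pos_of_pos h1 _
      have k1 := h' s hs
      have k2 := hd s hs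
      have k3 := hmh _ hm
      have k4 : (1 - (1 + s) / 2) ^ (q - 1) ≤ (1 - s) ^ (q - 1) :=
        Real.rpow_le_rpow (by linarith) (by linarith) hq'.le
      have k5 := mul_le_mul_of_nonneg_left k4 (tail_nonneg D.ω0 ((1 + s) / 2))
      rw [div_mul_eq_mul_div, le_div_iff₀ hq', ← mul_le_mul_iff_left₀ hx]
      have hCA : 0 ≤ C' * A := by nlinarith
      calc tailInt ω s * (q - 1) * (1 - s) ^ (q - 1)
          = (q - 1) * (tailInt ω s * (1 - s) ^ (q - 1)) := by ring
        _ ≤ (q - 1) * (C' * tailInt W s) := by gcongr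
        _ ≤ (q - 1) * (C' * (A * tailInt W ((1 + s) / 2))) := by gcongr
        _ = C' * A * ((q - 1) * tailInt W ((1 + s) / 2)) := by ring
        _ ≤ C' * A * (tailInt ω ((1 + s) / 2) * (1 - s) ^ (q - 1)) :=
          mul_le_mul_of_nonneg_left (k3.trans k5) hCA
        _ = _ := by ring
    · -- choose K
      set B := 1 + (q - 1) * C with hB
      have hB0 : 0 < B := by positivity
      have hB1 : 1 < B := by rw [hB]; linarith [mul_pos hq' hC0]
      have hK1 : 1 < (2 * B) ^ (1 / (q - 1)) :=
        Real.one_lt_rpow (by linarith) (by positivity)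
      set K := (2 * B) ^ (1 / (q - 1)) with hK
      have hKp : K ^ (q - 1) = 2 * B := by
        rw [hK, ← Real.rpow_mul (by positivity), one_div, inv_mul_cancel₀ hq'.ne', Real.rpow_one]
      have hK0 : 0 < K := by linarith
      refine ⟨K, hK1, 2 * B / (2 * B - 1), ?_, fun s hs => ?_⟩
      · rw [lt_div_iff₀ (by linarith)]; linarith
      have h1 : 0 < 1 - s := by linarith [hs.2]
      have h2 : (1 - s) / K ≤ 1 - s := div_le_self h1.le hK1.le
      have h3 : 0 < (1 - s) / K := by positivity
      set b := 1 - (1 - s) / K with hb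
      have hbm : b ∈ Ico (0:ℝ) 1 := ⟨by linarith [hs.1], by linarith⟩
      have k1 := V_upper hq D hs.1 (show s ≤ b by linarith) hbm.2.le
      have k2 := hbh b hbm
      rw [show 1 - b = (1 - s) / K by rw [hb]; ring, Real.div_rpow h1.le hK0.le, hKp] at k2
      have k3 := D.ident s hs
      have k4 := (h s hs).2
      have hx : 0 < (1 - s) ^ (q - 1) := Real.rpow_pos_of_pos h1 _
      have hsb := tail_anti D.ωi D.ω0 hs.1 (show s ≤ b by linarith) hbm.2.le
      have k5 : tailInt ω s * (1 - s) ^ (q - 1) ≤ B * tailInt V s := by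
        rw [hB, ← k3]
        have := mul_le_mul_of_nonneg_left k4 hq'.le
        linarith
      generalize (1 - s) ^ (q - 1) = x at *
      have k6 : tailInt ω s * x ≤ (B * (tailInt ω s - tailInt ω b) + tailInt ω b / 2) * x := by
        calc tailInt ω s * x ≤ B * tailInt V s := k5
          _ ≤ B * (x * (tailInt ω s - tailInt ω b) + tailInt ω b * (x / (2 * B))) :=
            mul_le_mul_of_nonneg_left (by linarith) hB0.le
          _ = _ := by field_simp
      have k7 := le_of_mul_le_mul_right k6 hx
      rw [div_mul_eq_mul_div, div_le_iff₀ (by linarith)]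
      linarith
  · rintro ⟨⟨C1, hC1, H1⟩, K, hK, C2, hC2, H2⟩
    have hK0 : 0 < K := by linarith
    have hd : 0 < 1 - 1 / C2 := by
      have : 1 / C2 < 1 := by rw [div_lt_one (by linarith)]; exact hC2
      linarith
    have h2p : (0:ℝ) < 2 ^ (q - 1) := by positivity
    have hKp : (0:ℝ) < K ^ (q - 1) := by positivity
    set E1 := 2 * C1 * 2 ^ (q - 1) with hE1
    set E2 := K ^ (q - 1) / ((1 - 1 / C2) * (q - 1)) with hE2
    refine ⟨max 1 (max E1 E2), le_max_left _ _, fun s hs => ?_⟩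
    have h1 : 0 < 1 - s := by linarith [hs.2]
    have hx : 0 < (1 - s) ^ (q - 1) := Real.rpow_pos_of_pos h1 _
    constructor
    · refine le_trans ?_ (mul_le_mul_of_nonneg_right
        (le_max_of_le_right (le_max_left _ _)) (D.Wpos s hs).le)
      refine (hbh s hs).trans ?_
      have hm : (1 + s) / 2 < 1 := by linarith
      have k1 := tail_ge D.Wi hs.1 (b := (1 + s) / 2) (by linarith) hm.le
        (M := tailInt ω ((1 + s) / 2) * ((1 - s) / 2) ^ (q - 1) / (1 - s)) (by
          intro t ht
          have ht1 := ht.2.trans hm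
          rw [D.W_eq ht1]
          apply div_le_div₀
          · exact mul_nonneg (tail_nonneg D.ω0 _) (Real.rpow_nonneg (by linarith) _)
          · apply mul_le_mul (tail_anti D.ωi D.ω0 (hs.1.trans ht.1.le) ht.2.le hm.le) _
              (Real.rpow_nonneg (by linarith) _) (tail_nonneg D.ω0 _)
            exact Real.rpow_le_rpow (by linarith) (by linarith [ht.2]) hq'.le
          · linarith
          · linarith [ht.1])
      have k2 := tail_nonneg D.W0 ((1 + s) / 2)
      rw [Real.div_rpow h1.le (by norm_num)] at k1
      have k3 := H1 s hs
      generalize (1 - s) ^ (q - 1) = x at *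
      have e : tailInt ω ((1 + s) / 2) * (x / 2 ^ (q - 1)) / (1 - s) * ((1 + s) / 2 - s) =
          tailInt ω ((1 + s) / 2) * x / (2 * 2 ^ (q - 1)) := by
        field_simp; ring
      rw [e] at k1
      have k4 : tailInt ω ((1 + s) / 2) * x ≤ tailInt W s * (2 * 2 ^ (q - 1)) := by
        rw [← div_le_iff₀ (by positivity)]; linarith
      calc tailInt ω s * x ≤ C1 * tailInt ω ((1 + s) / 2) * x := by gcongr
        _ = C1 * (tailInt ω ((1 + s) / 2) * x) := by ring
        _ ≤ C1 * (tailInt W s * (2 * 2 ^ (q - 1))) := by gcongr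
        _ = E1 * tailInt W s := by rw [hE1]; ring
    · refine le_trans ?_ (mul_le_mul_of_nonneg_right
        (le_max_of_le_right (le_max_right _ _)) (tail_nonneg D.V0 _))
      have h2 : (1 - s) / K ≤ 1 - s := div_le_self h1.le hK.le
      have h3 : 0 < (1 - s) / K := by positivity
      have k1 := H2 s hs
      set b := 1 - (1 - s) / K with hb
      have k2 := V_lower hq D hs.1 (show s ≤ b by linarith) (by linarith)
      rw [show 1 - b = (1 - s) / K by rw [hb]; ring, Real.div_rpow h1.le hK0.le] at k2
      have k3 := hmh s hs
      have k4 : (1 - 1 / C2) * tailInt ω s ≤ tailInt ω s - tailInt ω b := by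
        have : tailInt ω b ≤ 1 / C2 * tailInt ω s := by
          rw [div_mul_eq_mul_div, le_div_iff₀ (by linarith)]; linarith
        linarith
      generalize (1 - s) ^ (q - 1) = x at *
      have k5 : x / K ^ (q - 1) * ((1 - 1 / C2) * tailInt ω s) ≤ tailInt V s :=
        (mul_le_mul_of_nonneg_left k4 (by positivity)).trans k2
      have k6 : x * ((1 - 1 / C2) * tailInt ω s) ≤ K ^ (q - 1) * tailInt V s := by
        rw [div_mul_eq_mul_div, div_le_iff₀ hKp] at k5; linarith
      rw [hE2, div_mul_eq_mul_div, le_div_iff₀ (by positivity)]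
      have := mul_le_mul_of_nonneg_left k3 hd.le
      linarith

end cls

/-- Theorem 2: two-sided comparability of the two Bergman norms. -/
theorem statement1 (p q : ℝ) (hp : 0 < p) (hq : 0 < q)
    (ω : ℝ → ℝ) (hω : IsRadialWeight ω)
    (hInt : IntegrableOn (fun t => tailInt ω t * (1 - t) ^ (q - 2)) (Ioo (0:ℝ) 1)) :
    ((q < 1 →
      ((∃ C : ℝ, 1 ≤ C ∧ ∀ f : ℂ → ℂ, DifferentiableOn ℂ f (ball (0:ℂ) 1) →
          (1 / C) * Apq p (q - 1) ω f ≤ Apq p (q - 2) (tailInt ω) f ∧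
          Apq p (q - 2) (tailInt ω) f ≤ C * Apq p (q - 1) ω f) ↔
        Dhat (fun t => tailInt ω t * (1 - t) ^ (q - 2)))) ∧
     (q = 1 →
      ((∃ C : ℝ, 1 ≤ C ∧ ∀ f : ℂ → ℂ, DifferentiableOn ℂ f (ball (0:ℂ) 1) →
          (1 / C) * Apq p (q - 1) ω f ≤ Apq p (q - 2) (tailInt ω) f ∧
          Apq p (q - 2) (tailInt ω) f ≤ C * Apq p (q - 1) ω f) ↔
        Dclass (fun t => tailInt ω t * (1 - t) ^ (q - 2)))) ∧
     (1 < q →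
      ((∃ C : ℝ, 1 ≤ C ∧ ∀ f : ℂ → ℂ, DifferentiableOn ℂ f (ball (0:ℂ) 1) →
          (1 / C) * Apq p (q - 1) ω f ≤ Apq p (q - 2) (tailInt ω) f ∧
          Apq p (q - 2) (tailInt ω) f ≤ C * Apq p (q - 1) ω f) ↔
        Dclass ω))) := by
  have D := mkDat hω hInt
  have e := NC_iff_TT hp D
  exact ⟨fun h => e.trans (case_lt h D), fun h => e.trans (case_eq h D),
    fun h => e.trans (case_gt h D)⟩
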